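/- Let Δ>0, let φ and P_A satisfy hypothesis (H2), let P_0 be a discrete distribution with finite support as described, let γ>0, and for ρ∈(0,1) set α(ρ) := γρ|ln ρ| and I(ρ,α(ρ),τ) := inf_{q∈[0,E[X²]]} sup_{r≥0} { (1/α(ρ))·I_{P_{0,ρ}}((α(ρ)/ρ)(r+τ)) + I_{P_out}(q,E[X²]) − r(E[X²]−q)/2 }. Then for every τ∈[0, 2/(γv_K²)), I(ρ,α(ρ),τ) converges as ρ→0⁺ and lim_{ρ→0⁺} I(ρ,α(ρ),τ) = min_{1≤k≤K+1} { I_{P_out}(E[X²·1{|X|≥v_k}],E[X²]) + ℙ(|X|≥v_k)/γ + τ·E[X²·1{|X|<v_k}]/2 }. -/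

import Mathlib

open MeasureTheory ProbabilityTheory Real

noncomputable section

namespace GLM

/-- Standard Gaussian measure on ℝ. -/
def stdG : Measure ℝ := gaussianReal 0 1

/-- `n` i.i.d. copies of a measure on ℝ. -/
def iid (n : ℕ) (μ : Measure ℝ) : Measure (Fin n → ℝ) := Measure.pi fun _ => μ

/-- The sparse prior `(1-ρ)δ₀ + ρ P₀`. -/
def sparsePrior (ρ : ℝ) (P0 : Measure ℝ) : Measure ℝ :=
  ENNReal.ofReal (1 - ρ) • Measure.dirac 0 + ENNReal.ofReal ρ • P0

/-- Second moment of a real measure. -/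
def secondMoment (P : Measure ℝ) : ℝ := ∫ x, x ^ 2 ∂P

/-- The transition density `P_out(y|x)`. -/
def Pout (Δ : ℝ) {kA : ℕ} (PA : Measure (Fin kA → ℝ)) (φ : ℝ → (Fin kA → ℝ) → ℝ)
    (y x : ℝ) : ℝ :=
  (Real.sqrt (2 * π * Δ))⁻¹ * ∫ a, Real.exp (-(y - φ x a) ^ 2 / (2 * Δ)) ∂PA

/-- Scalar channel mutual information `I_{P_out}(q, ρ')`. -/
def IPout (Δ : ℝ) {kA : ℕ} (PA : Measure (Fin kA → ℝ)) (φ : ℝ → (Fin kA → ℝ) → ℝ)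
    (q ρ' : ℝ) : ℝ :=
  (∫ v, ∫ a, ∫ z,
      Real.log (Pout Δ PA φ (φ (Real.sqrt ρ' * v) a + Real.sqrt Δ * z) (Real.sqrt ρ' * v))
      ∂stdG ∂PA ∂stdG)
  - ∫ v, ∫ w, ∫ a, ∫ z,
      Real.log (∫ w', Pout Δ PA φ
        (φ (Real.sqrt q * v + Real.sqrt (ρ' - q) * w) a + Real.sqrt Δ * z)
        (Real.sqrt q * v + Real.sqrt (ρ' - q) * w') ∂stdG) ∂stdG ∂PA ∂stdG ∂stdG

/-- `ψ_P(r)` for the scalar additive Gaussian channel with prior `P`. -/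
def psiP (P : Measure ℝ) (r : ℝ) : ℝ :=
  ∫ xs, ∫ z, Real.log (∫ x, Real.exp (r * xs * x + Real.sqrt r * z * x - r * x ^ 2 / 2) ∂P)
    ∂stdG ∂P

/-- `I_{P_{0,n}}(r)`. -/
def IP0 (ρ : ℝ) (P0 : Measure ℝ) (r : ℝ) : ℝ :=
  r * ρ * secondMoment P0 / 2 - psiP (sparsePrior ρ P0) r

/-- Replica symmetric potential. -/
def iRS (Δ : ℝ) {kA : ℕ} (PA : Measure (Fin kA → ℝ)) (φ : ℝ → (Fin kA → ℝ) → ℝ)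
    (P0 : Measure ℝ) (α ρ q r : ℝ) : ℝ :=
  (1 / α) * IP0 ρ P0 (α / ρ * r) + IPout Δ PA φ q (secondMoment P0)
    - r * (secondMoment P0 - q) / 2

/-- density of the observations given signal and matrix. -/
def pCond (Δ : ℝ) {kA : ℕ} (PA : Measure (Fin kA → ℝ)) (φ : ℝ → (Fin kA → ℝ) → ℝ)
    (n m : ℕ) (kn : ℝ) (Φ : Fin m → Fin n → ℝ) (x : Fin n → ℝ) (y : Fin m → ℝ) : ℝ :=
  ∏ μ, Pout Δ PA φ (y μ) ((∑ i, Φ μ i * x i) / Real.sqrt kn)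

/-- marginal density of the observations given the matrix. -/
def pMarg (Δ : ℝ) {kA : ℕ} (PA : Measure (Fin kA → ℝ)) (φ : ℝ → (Fin kA → ℝ) → ℝ)
    (n m : ℕ) (P : Measure ℝ) (kn : ℝ) (Φ : Fin m → Fin n → ℝ) (y : Fin m → ℝ) : ℝ :=
  ∫ x, pCond Δ PA φ n m kn Φ x y ∂(iid n P)

/-- The observations `Y`. -/
def Yobs (Δ : ℝ) {kA : ℕ} (φ : ℝ → (Fin kA → ℝ) → ℝ) (n m : ℕ) (kn : ℝ)
    (Φ : Fin m → Fin n → ℝ) (x : Fin n → ℝ) (a : Fin m → Fin kA → ℝ) (z : Fin m → ℝ) :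
    Fin m → ℝ :=
  fun μ => φ ((∑ i, Φ μ i * x i) / Real.sqrt kn) (a μ) + Real.sqrt Δ * z μ

/-- The conditional mutual information `I(X*;Y|Φ)`. -/
def MI (Δ : ℝ) {kA : ℕ} (PA : Measure (Fin kA → ℝ)) (φ : ℝ → (Fin kA → ℝ) → ℝ)
    (P0 : Measure ℝ) (ρ : ℝ) (n m : ℕ) : ℝ :=
  ∫ x, ∫ Φ, ∫ a, ∫ z,
    Real.log (pCond Δ PA φ n m (n * ρ) Φ x (Yobs Δ φ n m (n * ρ) Φ x a z)
      / pMarg Δ PA φ n m (sparsePrior ρ P0) (n * ρ) Φ (Yobs Δ φ n m (n * ρ) Φ x a z))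
    ∂(iid m stdG) ∂(Measure.pi fun _ : Fin m => PA) ∂(Measure.pi fun _ : Fin m => iid n stdG)
    ∂(iid n (sparsePrior ρ P0))

/-- The truncated second moment E[X^2 * 1(|X| < v)]. -/
def headSM (P : Measure ℝ) (v : ℝ) : ℝ := ∫ x, if |x| < v then x ^ 2 else 0 ∂P

/-- The truncated second moment E[X^2 * 1(|X| >= v)]. -/
def truncSMge (P : Measure ℝ) (v : ℝ) : ℝ := ∫ x, if v ≤ |x| then x ^ 2 else 0 ∂P

/-- The tail probability P(|X| >= v). -/
def tailProb (P : Measure ℝ) (v : ℝ) : ℝ := (P {x | v ≤ |x|}).toReal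

/-- Extended replica-symmetric potential with side information parameter τ. -/
def iRSside (Δ : ℝ) {kA : ℕ} (PA : Measure (Fin kA → ℝ)) (φ : ℝ → (Fin kA → ℝ) → ℝ)
    (P0 : Measure ℝ) (α ρ q r τ : ℝ) : ℝ :=
  (1 / α) * IP0 ρ P0 (α / ρ * (r + τ)) + IPout Δ PA φ q (secondMoment P0)
    - r * (secondMoment P0 - q) / 2

/-! The data enter the potential through two scalar channels. In the overlap `q`, conditioning the
output channel on a Gaussian component of variance `q` makes `IPout` an entropy along the heat
semigroup; submodularity of entropy says that its increments decrease, so `IPout` is concave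
in `q`. In the signal-to-noise ratio `s`, a value `x` of the sparse prior costs `|log ρ|` to locate,
so at the scale `α = γ ρ |log ρ|` the information `IP0` tends to the expectation of
`min (s * X ^ 2 / 2) (1 / γ)`: an all-or-nothing transition for each level of `|X|`.

For an overlap `q` lying between the truncated second moments of two consecutive levels, take `s`
critical for the lower level `a`, that is `s * a ^ 2 / 2 = 1 / γ`. The limiting potential is then
concave in `q` and equals the threshold values at the two ends, so it dominates their minimum.
Conversely, at a threshold overlap no choice of `s` exceeds the threshold value, because capping the
energy on the tail and keeping it on the head bounds the minimum from above. -/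

section Concavity

variable {s : Set ℝ} {f : ℝ → ℝ}

lemma natCast_mul_sub_le_sub (hs : s.OrdConnected)
    (hf : ∀ ⦃x a b⦄, 0 ≤ a → 0 ≤ b → x ∈ s → x + a + b ∈ s →
      f x + f (x + a + b) ≤ f (x + a) + f (x + b))
    {x δ : ℝ} (hδ : 0 ≤ δ) (hx : x ∈ s) (n : ℕ) (hn : x + n * δ + δ ∈ s) :
    n * (f (x + n * δ + δ) - f (x + n * δ)) ≤ f (x + n * δ) - f x := by
  induction n generalizing x with
  | zero => simp
  | succ n ih =>
    have hshift : x + (n + 1 : ℕ) * δ = x + δ + n * δ := by push_cast; ring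
    rw [hshift] at hn ⊢
    have hnδ : 0 ≤ n * δ := by positivity
    have hstep := ih (hs.out hx hn ⟨by linarith, by linarith⟩) hn
    have hlast := hf (a := δ) (b := δ + n * δ) hδ (by positivity) hx
      (by convert hn using 1; ring)
    rw [show x + δ + (δ + n * δ) = x + δ + n * δ + δ by ring, ← add_assoc x δ] at hlast
    push_cast
    linarith

lemma sub_le_natCast_mul_sub (hs : s.OrdConnected)
    (hf : ∀ ⦃x a b⦄, 0 ≤ a → 0 ≤ b → x ∈ s → x + a + b ∈ s →
      f x + f (x + a + b) ≤ f (x + a) + f (x + b))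
    {x δ : ℝ} (hδ : 0 ≤ δ) (hx : x ∈ s) (n : ℕ) (hn : x + n * δ ∈ s) :
    f (x + n * δ) - f x ≤ n * (f (x + δ) - f x) := by
  induction n with
  | zero => simp
  | succ n ih =>
    have hshift : x + (n + 1 : ℕ) * δ = x + n * δ + δ := by push_cast; ring
    rw [hshift] at hn ⊢
    have hnδ : 0 ≤ n * δ := by positivity
    have hstep := ih (hs.out hx hn ⟨by linarith, by linarith⟩)
    have hlast := hf hnδ hδ hx hn
    push_cast
    linarith

lemma natCast_mul_sub_le_floor_mul_sub (hs : s.OrdConnected) (hanti : AntitoneOn f s)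
    (hf : ∀ ⦃x a b⦄, 0 ≤ a → 0 ≤ b → x ∈ s → x + a + b ∈ s →
      f x + f (x + a + b) ≤ f (x + a) + f (x + b))
    {x z δ : ℝ} (hδ : 0 < δ) (n : ℕ) (hx : x ∈ s) (hz : z ∈ s) (hyz : x + n * δ ≤ z) :
    n * (f z - f (x + n * δ)) ≤ ⌊(z - (x + n * δ)) / δ⌋₊ * (f (x + n * δ) - f x) := by
  set y := x + n * δ
  set m := ⌊(z - y) / δ⌋₊
  have hxy : x ≤ y := le_add_of_nonneg_right (by positivity)
  have hy : y ∈ s := hs.out hx hz ⟨hxy, hyz⟩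
  have hm : y + m * δ ≤ z := by
    have := (le_div_iff₀ hδ).1 (Nat.floor_le (div_nonneg (sub_nonneg.2 hyz) hδ.le))
    linarith
  have hym : y + m * δ ∈ s := hs.out hy hz ⟨le_add_of_nonneg_right (by positivity), hm⟩
  obtain hm0 | hm1 := Nat.eq_zero_or_pos m
  · rw [hm0, Nat.cast_zero, zero_mul]
    exact mul_nonpos_of_nonneg_of_nonpos n.cast_nonneg (sub_nonpos.2 (hanti hy hz hyz))
  · have hδm : δ ≤ m * δ := le_mul_of_one_le_left hδ.le (by exact_mod_cast hm1)
    have hyδ : y + δ ∈ s := hs.out hy hz ⟨by linarith, by linarith⟩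
    calc n * (f z - f y) ≤ n * (m * (f (y + δ) - f y)) := by
          gcongr
          linarith [hanti hym hz hm, sub_le_natCast_mul_sub hs hf hδ.le hy m hym]
      _ = m * (n * (f (y + δ) - f y)) := by ring
      _ ≤ m * (f y - f x) := by
          gcongr
          exact natCast_mul_sub_le_sub hs hf hδ.le hx n hyδ

/- The increments over steps of length `δ = (y - x) / n` decrease, so comparing the `n` steps from
`x` to `y` with those that fit between `y` and `z` bounds the slopes up to one step; then
`n → ∞`. -/
lemma concaveOn_of_antitoneOn_of_add_le_add (hs : Convex ℝ s) (hanti : AntitoneOn f s)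
    (hf : ∀ ⦃x a b⦄, 0 ≤ a → 0 ≤ b → x ∈ s → x + a + b ∈ s →
      f x + f (x + a + b) ≤ f (x + a) + f (x + b)) :
    ConcaveOn ℝ s f := by
  refine concaveOn_of_slope_anti_adjacent hs fun {x y z} hx hz hxy hyz => ?_
  have hord := hs.ordConnected
  have hfyx : f y - f x ≤ 0 := sub_nonpos.2 (hanti hx (hord.out hx hz ⟨hxy.le, hyz.le⟩) hxy.le)
  have hlen : 0 < y - x := sub_pos.2 hxy
  rw [div_le_div_iff₀ (sub_pos.2 hyz) hlen]
  by_contra! hlt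
  obtain ⟨n, hn⟩ := exists_nat_gt
    (max 0 (-((f y - f x) * (y - x)) / ((f z - f y) * (y - x) - (f y - f x) * (z - y))))
  have hn0 : (0 : ℝ) < n := (le_max_left _ _).trans_lt hn
  have hδ : 0 < (y - x) / n := by positivity
  have hy : x + n * ((y - x) / n) = y := by field_simp; ring
  have hsteps := natCast_mul_sub_le_floor_mul_sub hord hanti hf hδ n hx hz (hy.trans_le hyz.le)
  rw [hy] at hsteps
  have hfloor := mul_le_mul_of_nonpos_right
    (Nat.sub_one_lt_floor ((z - y) / ((y - x) / n))).le hfyx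
  have hslope : n * (f z - f y) * (y - x) ≤ (n * (z - y) - (y - x)) * (f y - f x) := by
    refine (mul_le_mul_of_nonneg_right (hsteps.trans hfloor) hlen.le).trans_eq ?_
    field_simp
  have := (div_lt_iff₀ (sub_pos.2 hlt)).1 ((le_max_right _ _).trans_lt hn)
  linarith

end Concavity

section Entropy

lemma integral_mem_Icc_of_mem_Icc {X : Type*} [MeasurableSpace X] {μ : Measure X}
    [IsProbabilityMeasure μ] {f : X → ℝ} {c C : ℝ} (hf : Measurable f)
    (hfC : ∀ᵐ x ∂μ, f x ∈ Set.Icc c C) : ∫ x, f x ∂μ ∈ Set.Icc c C :=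
  (convex_Icc c C).integral_mem isClosed_Icc hfC
    (Integrable.of_mem_Icc c C hf.aemeasurable hfC)

lemma exists_negMulLog_mem_Icc (c C : ℝ) :
    ∃ D, ∀ t ∈ Set.Icc c C, negMulLog t ∈ Set.Icc (-D) D := by
  obtain ⟨D, hD⟩ := isCompact_Icc.exists_bound_of_continuousOn
    (continuous_negMulLog.continuousOn (s := Set.Icc c C))
  exact ⟨D, fun t ht => abs_le.1 (hD t ht)⟩

lemma integrable_mul_log {X : Type*} [MeasurableSpace X] {μ : Measure X} {u g : X → ℝ} {c C : ℝ}
    (hu : Integrable u μ) (hg : Measurable g) (hc : 0 < c) (hgC : ∀ x, g x ∈ Set.Icc c C) :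
    Integrable (fun x => u x * log (g x)) μ :=
  hu.mul_bdd (c := max |log c| |log C|) hg.log.aestronglyMeasurable <| ae_of_all _ fun x =>
    abs_le_max_abs_abs (log_le_log hc (hgC x).1) (log_le_log (hc.trans_le (hgC x).1) (hgC x).2)

lemma sub_mul_div_le_mul_log {t a b m : ℝ} (ht : 0 < t) (ha : 0 < a) (hb : 0 < b) (hm : 0 < m) :
    t - a * b / m ≤ t * log t - t * log a - t * log b + t * log m := by
  have h := mul_le_mul_of_nonneg_left
    (one_sub_inv_le_log_of_pos (x := t * m / (a * b)) (by positivity)) ht.le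
  rw [log_div (by positivity) (by positivity), log_mul ht.ne' hm.ne', log_mul ha.ne' hb.ne'] at h
  calc t - a * b / m = t * (1 - (t * m / (a * b))⁻¹) := by field_simp
    _ ≤ t * (log t + log m - (log a + log b)) := h
    _ = _ := by ring

variable {X Y : Type*} [MeasurableSpace X] [MeasurableSpace Y] {μ : Measure X} {ν : Measure Y}

lemma integral_prod_mul_comp_fst [SFinite μ] [SFinite ν] {u : X × Y → ℝ} {g : X → ℝ}
    (hug : Integrable (fun p => u p * g p.1) (μ.prod ν)) :
    ∫ p, u p * g p.1 ∂μ.prod ν = ∫ x, (∫ y, u (x, y) ∂ν) * g x ∂μ := by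
  simp_rw [integral_prod _ hug, integral_mul_const]

lemma integral_prod_mul_comp_snd [SFinite μ] [SFinite ν] {u : X × Y → ℝ} {g : Y → ℝ}
    (hug : Integrable (fun p => u p * g p.2) (μ.prod ν)) :
    ∫ p, u p * g p.2 ∂μ.prod ν = ∫ y, (∫ x, u (x, y) ∂μ) * g y ∂ν := by
  simp_rw [integral_prod_symm _ hug, integral_mul_const]

/- Nonnegativity of the relative entropy of `u` with respect to the normalised product
`a b / m` of its marginals. -/
lemma negMulLog_integral_prod_add_le [IsProbabilityMeasure μ] [IsProbabilityMeasure ν]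
    {u : X × Y → ℝ} {c C : ℝ} (hu : Measurable u) (hc : 0 < c) (huC : ∀ p, u p ∈ Set.Icc c C) :
    negMulLog (∫ p, u p ∂μ.prod ν) + ∫ p, negMulLog (u p) ∂μ.prod ν ≤
      ∫ x, negMulLog (∫ y, u (x, y) ∂ν) ∂μ + ∫ y, negMulLog (∫ x, u (x, y) ∂μ) ∂ν := by
  set m := ∫ p, u p ∂μ.prod ν
  set a : X → ℝ := fun x => ∫ y, u (x, y) ∂ν
  set b : Y → ℝ := fun y => ∫ x, u (x, y) ∂μ
  have ham : Measurable a := hu.stronglyMeasurable.integral_prod_right'.measurable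
  have hbm : Measurable b := hu.stronglyMeasurable.integral_prod_left'.measurable
  have haC (x) : a x ∈ Set.Icc c C :=
    integral_mem_Icc_of_mem_Icc (hu.comp measurable_prodMk_left) (ae_of_all _ fun y => huC (x, y))
  have hbC (y) : b y ∈ Set.Icc c C :=
    integral_mem_Icc_of_mem_Icc (hu.comp measurable_prodMk_right) (ae_of_all _ fun x => huC (x, y))
  have hm : 0 < m := hc.trans_le (integral_mem_Icc_of_mem_Icc hu (ae_of_all _ huC)).1
  have hui : Integrable u (μ.prod ν) := .of_mem_Icc c C hu.aemeasurable (ae_of_all _ huC)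
  have hai : Integrable a μ := .of_mem_Icc c C ham.aemeasurable (ae_of_all _ haC)
  have hbi : Integrable b ν := .of_mem_Icc c C hbm.aemeasurable (ae_of_all _ hbC)
  have hlu := integrable_mul_log hui hu hc huC
  have hla : Integrable (fun p => u p * log (a p.1)) (μ.prod ν) :=
    integrable_mul_log hui (ham.comp measurable_fst) hc fun p => haC p.1
  have hlb : Integrable (fun p => u p * log (b p.2)) (μ.prod ν) :=
    integrable_mul_log hui (hbm.comp measurable_snd) hc fun p => hbC p.2
  have hdiff : Integrable (fun p => u p * log (u p) - u p * log (a p.1)) (μ.prod ν) := hlu.sub hla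
  have hdiff' : Integrable
      (fun p => u p * log (u p) - u p * log (a p.1) - u p * log (b p.2)) (μ.prod ν) :=
    hdiff.sub hlb
  have hgibbs : ∫ p, (u p - a p.1 * b p.2 / m) ∂μ.prod ν ≤
      ∫ p, (u p * log (u p) - u p * log (a p.1) - u p * log (b p.2) + u p * log m) ∂μ.prod ν :=
    integral_mono (hui.sub ((hai.mul_prod hbi).div_const m)) (hdiff'.add (hui.mul_const _))
      fun p => sub_mul_div_le_mul_log (hc.trans_le (huC p).1) (hc.trans_le (haC p.1).1)
        (hc.trans_le (hbC p.2).1) hm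
  have hleft : ∫ p, (u p - a p.1 * b p.2 / m) ∂μ.prod ν = 0 := by
    rw [integral_sub hui ((hai.mul_prod hbi).div_const m), integral_div, integral_prod_mul,
      ← integral_prod u hui, ← integral_prod_symm u hui, mul_div_cancel_right₀ _ hm.ne', sub_self]
  rw [hleft, integral_add hdiff' (hui.mul_const _), integral_sub hdiff hlb, integral_sub hlu hla,
    integral_prod_mul_comp_fst (g := fun x => log (a x)) hla,
    integral_prod_mul_comp_snd (g := fun y => log (b y)) hlb, integral_mul_const] at hgibbs
  simp only [negMulLog, neg_mul, integral_neg]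
  linarith

end Entropy

section HeatSemigroup

instance : IsProbabilityMeasure stdG := by
  unfold stdG
  infer_instance

/-- The heat semigroup: the average of `f` over a Gaussian of variance `s` centred at `x`. Negative
times are truncated to `0`, in accordance with `√s = 0` for `s < 0`. -/
def heat (s : ℝ) (f : ℝ → ℝ) (x : ℝ) : ℝ := ∫ w, f (x + w) ∂gaussianReal 0 s.toNNReal

lemma integral_stdG_eq_heat (s : ℝ) {f : ℝ → ℝ} (hf : Measurable f) (x : ℝ) :
    ∫ w, f (x + √s * w) ∂stdG = heat s f x := by
  have hmap : stdG.map (√s * ·) = gaussianReal 0 s.toNNReal := by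
    rw [stdG, gaussianReal_map_const_mul, mul_zero, mul_one]
    congr 1
    ext
    simp [Real.sq_sqrt', Real.coe_toNNReal']
  have hshift : Measurable fun w => f (x + w) := by fun_prop
  rw [heat, ← hmap, integral_map (by fun_prop) hshift.aestronglyMeasurable]

lemma measurable_uncurry_heat {Y : Type*} [MeasurableSpace Y] {f : Y → ℝ → ℝ}
    (hf : Measurable (Function.uncurry f)) (s : ℝ) :
    Measurable fun p : Y × ℝ => heat s (f p.1) p.2 := by
  have h : Measurable fun p : (Y × ℝ) × ℝ => f p.1.1 (p.1.2 + p.2) :=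
    hf.comp (f := fun p : (Y × ℝ) × ℝ => (p.1.1, p.1.2 + p.2)) (by fun_prop)
  exact h.stronglyMeasurable.integral_prod_right.measurable

variable {f : ℝ → ℝ} {c C : ℝ}

@[fun_prop]
lemma measurable_heat (hf : Measurable f) (s : ℝ) : Measurable (heat s f) := by
  have h : Measurable fun p : ℝ × ℝ => f (p.1 + p.2) := by fun_prop
  exact h.stronglyMeasurable.integral_prod_right'.measurable

lemma heat_mem_Icc (hf : Measurable f) (hfC : ∀ x, f x ∈ Set.Icc c C) (s x : ℝ) :
    heat s f x ∈ Set.Icc c C :=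
  integral_mem_Icc_of_mem_Icc (by fun_prop) (ae_of_all _ fun w => hfC (x + w))

lemma heat_zero (f : ℝ → ℝ) : heat 0 f = f := by
  ext x
  simp [heat]

lemma integral_gaussianReal_prod (hf : Measurable f) {s t : ℝ} (hs : 0 ≤ s) (ht : 0 ≤ t) (x : ℝ) :
    ∫ p, f (x + p.1 + p.2) ∂(gaussianReal 0 s.toNNReal).prod (gaussianReal 0 t.toNNReal) =
      heat (s + t) f x := by
  have hconv := gaussianReal_conv_gaussianReal (m₁ := 0) (m₂ := 0) (v₁ := s.toNNReal)
    (v₂ := t.toNNReal)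
  rw [add_zero, Measure.conv, ← Real.toNNReal_add hs ht] at hconv
  have hshift : Measurable fun w => f (x + w) := by fun_prop
  simp_rw [heat, ← hconv, add_assoc]
  rw [integral_map (by fun_prop) hshift.aestronglyMeasurable]

lemma heat_heat (hf : Measurable f) (hfC : ∀ x, f x ∈ Set.Icc c C) {s t : ℝ} (hs : 0 ≤ s)
    (ht : 0 ≤ t) (x : ℝ) : heat s (heat t f) x = heat (s + t) f x := by
  rw [← integral_gaussianReal_prod hf hs ht, integral_prod]
  · rfl
  · exact .of_mem_Icc c C (by fun_prop) (ae_of_all _ fun _ => hfC _)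

lemma integrable_comp_const_add {μ : Measure ℝ} [IsFiniteMeasure μ] (hf : Measurable f)
    (hfC : ∀ x, f x ∈ Set.Icc c C) (x : ℝ) : Integrable (fun w => f (x + w)) μ :=
  .of_mem_Icc c C (by fun_prop) (ae_of_all _ fun _ => hfC _)

lemma negMulLog_heat_add_le (hf : Measurable f) (hc : 0 < c) (hfC : ∀ x, f x ∈ Set.Icc c C)
    {s t : ℝ} (hs : 0 ≤ s) (ht : 0 ≤ t) (x : ℝ) :
    negMulLog (heat (s + t) f x) + heat (s + t) (fun x => negMulLog (f x)) x ≤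
      heat s (fun x => negMulLog (heat t f x)) x +
        heat t (fun x => negMulLog (heat s f x)) x := by
  have h := negMulLog_integral_prod_add_le (μ := gaussianReal 0 s.toNNReal)
    (ν := gaussianReal 0 t.toNNReal) (u := fun p => f (x + p.1 + p.2)) (by fun_prop) hc
    fun p => hfC _
  rw [integral_gaussianReal_prod hf hs ht,
    integral_gaussianReal_prod (f := fun x => negMulLog (f x)) (by fun_prop) hs ht] at h
  simpa only [heat, add_right_comm x] using h

lemma heat_negMulLog_le (hf : Measurable f) (hc : 0 ≤ c) (hfC : ∀ x, f x ∈ Set.Icc c C)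
    (s x : ℝ) : heat s (fun x => negMulLog (f x)) x ≤ negMulLog (heat s f x) := by
  obtain ⟨D, hD⟩ := exists_negMulLog_mem_Icc c C
  exact concaveOn_negMulLog.le_map_integral continuous_negMulLog.continuousOn isClosed_Ici
    (ae_of_all _ fun w => hc.trans (hfC (x + w)).1) (integrable_comp_const_add hf hfC x)
    (integrable_comp_const_add (by fun_prop) (fun x => hD _ (hfC x)) x)

/-- The conditional entropy `E[-p log p]` of `p = E[f(U) | V]`, where `U` is a centred Gaussian of
variance `T` and `V` is its component of variance `q`. -/
def heatEntropy (f : ℝ → ℝ) (T q : ℝ) : ℝ :=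
  heat q (fun v => negMulLog (heat (T - q) f v)) 0

lemma integral_stdG_negMulLog_heat (hf : Measurable f) (T q : ℝ) :
    ∫ v, negMulLog (heat (T - q) f (√q * v)) ∂stdG = heatEntropy f T q := by
  have hm : Measurable fun v => negMulLog (heat (T - q) f v) := by fun_prop
  simpa only [zero_add, heatEntropy] using integral_stdG_eq_heat q hm 0

variable {T : ℝ}

lemma heatEntropy_add_eq_heat (hf : Measurable f) (hfC : ∀ x, f x ∈ Set.Icc c C) {q s t r : ℝ}
    (hq : 0 ≤ q) (hs : 0 ≤ s) (ht : 0 ≤ t) (hr : q + s + t = r) (hrT : r ≤ T) :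
    heatEntropy f T (q + s) = heat q (heat s fun x => negMulLog (heat t (heat (T - r) f) x)) 0 := by
  obtain ⟨D, hD⟩ := exists_negMulLog_mem_Icc c C
  have hsplit : heat t (heat (T - r) f) = heat (T - (q + s)) f := funext fun x => by
    rw [heat_heat hf hfC ht (sub_nonneg.2 hrT), ← hr]
    congr 1
    ring
  rw [hsplit, heat_heat (by fun_prop) (fun x => hD _ (heat_mem_Icc hf hfC _ x)) hq hs, heatEntropy]

lemma antitoneOn_heatEntropy (hf : Measurable f) (hc : 0 ≤ c) (hfC : ∀ x, f x ∈ Set.Icc c C) :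
    AntitoneOn (heatEntropy f T) (Set.Icc 0 T) := by
  rintro q ⟨hq, -⟩ q' ⟨-, hq'⟩ hqq'
  obtain ⟨s, hs, rfl⟩ := exists_nonneg_add_of_le hqq'
  obtain ⟨D, hD⟩ := exists_negMulLog_mem_Icc c C
  have hg := measurable_heat hf (T - (q + s))
  have hgC := heat_mem_Icc hf hfC (T - (q + s))
  have hleft := heatEntropy_add_eq_heat hf hfC hq hs le_rfl (add_zero _) hq'
  have hright := heatEntropy_add_eq_heat hf hfC hq le_rfl hs (by rw [add_zero]) hq'
  simp only [heat_zero, add_zero] at hleft hright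
  rw [hleft, hright]
  exact integral_mono
    (integrable_comp_const_add (by fun_prop)
      (heat_mem_Icc (by fun_prop) (fun x => hD _ (hgC x)) s) 0)
    (integrable_comp_const_add (by fun_prop) (fun x => hD _ (heat_mem_Icc hg hgC s x)) 0)
    fun w => heat_negMulLog_le hg hc hgC s (0 + w)

lemma heatEntropy_add_le (hf : Measurable f) (hc : 0 < c) (hfC : ∀ x, f x ∈ Set.Icc c C)
    {q a b : ℝ} (hq : 0 ≤ q) (ha : 0 ≤ a) (hb : 0 ≤ b) (hT : q + a + b ≤ T) :
    heatEntropy f T q + heatEntropy f T (q + a + b) ≤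
      heatEntropy f T (q + a) + heatEntropy f T (q + b) := by
  obtain ⟨D, hD⟩ := exists_negMulLog_mem_Icc c C
  obtain ⟨r, hr⟩ : ∃ r, q + a + b = r := ⟨_, rfl⟩
  rw [hr] at hT
  have hab := add_nonneg ha hb
  have hg := measurable_heat hf (T - r)
  have hgC := heat_mem_Icc hf hfC (T - r)
  have hint {t : ℝ} := integrable_comp_const_add (μ := gaussianReal 0 q.toNNReal)
    (by fun_prop) (fun x => hD _ (heat_mem_Icc hg hgC t x)) 0
  have hint' {s t : ℝ} := integrable_comp_const_add (μ := gaussianReal 0 q.toNNReal)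
    (by fun_prop) (heat_mem_Icc (by fun_prop) (fun x => hD _ (heat_mem_Icc hg hgC t x)) s) 0
  have hq0 := heatEntropy_add_eq_heat hf hfC hq le_rfl hab (by linarith) hT
  have hqab := heatEntropy_add_eq_heat hf hfC hq hab le_rfl (by linarith) hT
  have hqa := heatEntropy_add_eq_heat hf hfC hq ha hb hr hT
  have hqb := heatEntropy_add_eq_heat hf hfC hq hb ha (by linarith) hT
  rw [heat_zero, add_zero] at hq0
  rw [add_assoc, hq0, hqab, hqa, hqb]
  have hle := integral_mono ((hint (t := a + b)).add (hint' (s := a + b) (t := 0)))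
    ((hint' (s := a) (t := b)).add (hint' (s := b) (t := a))) fun w => by
      simpa only [Pi.add_apply, heat_zero] using negMulLog_heat_add_le hg hc hgC ha hb (0 + w)
  rwa [integral_add' hint hint', integral_add' hint' hint'] at hle

lemma concaveOn_heatEntropy (hf : Measurable f) (hc : 0 < c) (hfC : ∀ x, f x ∈ Set.Icc c C) :
    ConcaveOn ℝ (Set.Icc 0 T) (heatEntropy f T) :=
  concaveOn_of_antitoneOn_of_add_le_add (convex_Icc 0 T) (antitoneOn_heatEntropy hf hc.le hfC)
    fun _ _ _ ha hb hx hxab => heatEntropy_add_le hf hc hfC hx.1 ha hb hxab.2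

end HeatSemigroup

section GaussianDensity

/-- The value at `y` of a Gaussian lower envelope for the densities of variance `Δ` whose mean is
bounded by `B`. -/
def densityLower (Δ B y : ℝ) : ℝ := (√(2 * π * Δ))⁻¹ * exp (-(y ^ 2 + B ^ 2) / Δ)

/-- The value at `y` of a Gaussian upper envelope for the densities of variance `Δ` whose mean is
bounded by `B`. -/
def densityUpper (Δ B y : ℝ) : ℝ :=
  (√(2 * π * Δ))⁻¹ * (exp (B ^ 2 / (2 * Δ)) * exp (-(1 / (4 * Δ)) * y ^ 2))

/-- A quadratic bound for the logarithm of the numbers between `densityLower Δ B y` and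
`densityUpper Δ B y`. -/
def logDensityBound (Δ B y : ℝ) : ℝ := |log (√(2 * π * Δ))⁻¹| + (y ^ 2 + B ^ 2) / Δ

variable {Δ B : ℝ}

lemma densityLower_pos (hΔ : 0 < Δ) (B y : ℝ) : 0 < densityLower Δ B y := by
  unfold densityLower
  positivity

lemma gaussianPDFReal_mem_Icc (hΔ : 0 < Δ) {b : ℝ} (hb : |b| ≤ B) (y : ℝ) :
    gaussianPDFReal b Δ.toNNReal y ∈ Set.Icc (densityLower Δ B y) (densityUpper Δ B y) := by
  have hb2 : b ^ 2 ≤ B ^ 2 := sq_le_sq' (abs_le.1 hb).1 (abs_le.1 hb).2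
  rw [gaussianPDFReal, Real.coe_toNNReal _ hΔ.le, densityLower, densityUpper, ← exp_add]
  constructor <;> refine mul_le_mul_of_nonneg_left (exp_le_exp.2 ?_) (by positivity)
  · rw [div_le_div_iff₀ hΔ (by positivity)]
    nlinarith [mul_nonneg hΔ.le (sq_nonneg (y + b)), mul_nonneg hΔ.le (sub_nonneg.2 hb2)]
  · rw [div_add' _ _ _ (by positivity), div_le_div_iff_of_pos_right (by positivity)]
    have : -(1 / (4 * Δ)) * y ^ 2 * (2 * Δ) = -(y ^ 2 / 2) := by field_simp; ring
    nlinarith [sq_nonneg (y - 2 * b)]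

lemma abs_log_le_logDensityBound (hΔ : 0 < Δ) {t y : ℝ}
    (ht : t ∈ Set.Icc (densityLower Δ B y) (densityUpper Δ B y)) :
    |log t| ≤ logDensityBound Δ B y := by
  have hκ : (√(2 * π * Δ))⁻¹ ≠ 0 := by positivity
  have hlower := log_le_log (densityLower_pos hΔ B y) ht.1
  have hupper := log_le_log ((densityLower_pos hΔ B y).trans_le ht.1) ht.2
  rw [densityLower, log_mul hκ (exp_pos _).ne', log_exp, neg_div] at hlower
  rw [densityUpper, ← exp_add, log_mul hκ (exp_pos _).ne', log_exp] at hupper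
  have hB : B ^ 2 / (2 * Δ) ≤ B ^ 2 / Δ := by gcongr; linarith
  have hy : -(1 / (4 * Δ)) * y ^ 2 ≤ y ^ 2 / Δ :=
    (mul_nonpos_of_nonpos_of_nonneg (by simp [hΔ.le]) (sq_nonneg y)).trans (by positivity)
  rw [logDensityBound, abs_le]
  constructor
  · linarith [neg_abs_le (log (√(2 * π * Δ))⁻¹)]
  · linarith [le_abs_self (log (√(2 * π * Δ))⁻¹), add_div (y ^ 2) (B ^ 2) Δ]

lemma abs_mul_le_densityUpper_mul (hΔ : 0 < Δ) {p l y : ℝ}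
    (hp : p ∈ Set.Icc (densityLower Δ B y) (densityUpper Δ B y))
    (hl : |l| ≤ logDensityBound Δ B y) :
    |p * l| ≤ densityUpper Δ B y * logDensityBound Δ B y := by
  have hp0 := (densityLower_pos hΔ B y).trans_le hp.1
  rw [abs_mul, abs_of_pos hp0]
  exact mul_le_mul hp.2 hl (abs_nonneg l) (hp0.le.trans hp.2)

lemma integrable_densityUpper_mul_logDensityBound (hΔ : 0 < Δ) (B : ℝ) :
    Integrable fun y => densityUpper Δ B y * logDensityBound Δ B y := by
  have hb : 0 < 1 / (4 * Δ) := by positivity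
  have hexp := integrable_exp_neg_mul_sq hb
  have hsq := integrable_rpow_mul_exp_neg_mul_sq hb (s := 2) (by norm_num)
  set κ := (√(2 * π * Δ))⁻¹ with hκ
  set E := exp (B ^ 2 / (2 * Δ)) with hE
  refine ((hexp.const_mul (κ * E * (|log κ| + B ^ 2 / Δ))).add (hsq.const_mul (κ * E / Δ))).congr
    (ae_of_all _ fun y => ?_)
  simp only [densityUpper, logDensityBound, ← hκ, ← hE, Pi.add_apply, Real.rpow_two]
  ring

lemma integral_stdG_const_add_sqrt_mul (hΔ : 0 < Δ) {L : ℝ → ℝ} (hL : Measurable L) (b : ℝ) :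
    ∫ z, L (b + √Δ * z) ∂stdG = ∫ y, gaussianPDFReal b Δ.toNNReal y * L y := by
  rw [integral_stdG_eq_heat Δ hL b, heat, ← integral_map (f := L) (by fun_prop)
    hL.aestronglyMeasurable, gaussianReal_map_const_add, zero_add,
    integral_gaussianReal_eq_integral_smul (by simpa using hΔ)]
  rfl

end GaussianDensity

section Channel

lemma integral_integral_swap_of_dominated {X : Type*} [MeasurableSpace X] {μ : Measure X}
    [IsFiniteMeasure μ] {g : X → ℝ → ℝ} (hg : Measurable (Function.uncurry g))
    {D : ℝ → ℝ} (hD : Integrable D) (hgD : ∀ x y, |g x y| ≤ D y) :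
    ∫ x, (∫ y, g x y) ∂μ = ∫ y, ∫ x, g x y ∂μ :=
  integral_integral_swap
    ((hD.comp_snd μ).mono' hg.aestronglyMeasurable (ae_of_all _ fun p => hgD p.1 p.2))

lemma Pout_eq_integral_gaussianPDFReal {Δ : ℝ} (hΔ : 0 ≤ Δ) {kA : ℕ} (PA : Measure (Fin kA → ℝ))
    (φ : ℝ → (Fin kA → ℝ) → ℝ) (y x : ℝ) :
    Pout Δ PA φ y x = ∫ a, gaussianPDFReal (φ x a) Δ.toNNReal y ∂PA := by
  simp_rw [gaussianPDFReal, Real.coe_toNNReal _ hΔ, integral_const_mul, Pout]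

/-- The part of hypothesis (H2) on the activation `φ` that does not involve derivatives. -/
structure BoundedChannel {kA : ℕ} (φ : ℝ → (Fin kA → ℝ) → ℝ) (B : ℝ) : Prop where
  measurable : Measurable fun p : ℝ × (Fin kA → ℝ) => φ p.1 p.2
  abs_le : ∀ x a, |φ x a| ≤ B

namespace BoundedChannel

variable {Δ B : ℝ} {kA : ℕ} {φ : ℝ → (Fin kA → ℝ) → ℝ}

lemma measurable_gaussianPDFReal (hφ : BoundedChannel φ B) :
    Measurable fun p : (ℝ × ℝ) × (Fin kA → ℝ) =>
      gaussianPDFReal (φ p.1.2 p.2) Δ.toNNReal p.1.1 := by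
  have hmean : Measurable fun p : (ℝ × ℝ) × (Fin kA → ℝ) => φ p.1.2 p.2 :=
    hφ.measurable.comp (measurable_fst.snd.prodMk measurable_snd)
  exact measurable_uncurry_gaussianPDFReal.comp
    (hmean.prodMk (measurable_const.prodMk measurable_fst.fst))

variable {PA : Measure (Fin kA → ℝ)} [IsProbabilityMeasure PA]

lemma Pout_mem_Icc (hφ : BoundedChannel φ B) (hΔ : 0 < Δ) (y x : ℝ) :
    Pout Δ PA φ y x ∈ Set.Icc (densityLower Δ B y) (densityUpper Δ B y) := by
  rw [Pout_eq_integral_gaussianPDFReal hΔ.le]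
  have hm : Measurable fun a => gaussianPDFReal (φ x a) Δ.toNNReal y :=
    (hφ.measurable_gaussianPDFReal (Δ := Δ)).comp (f := fun a => ((y, x), a)) (by fun_prop)
  exact integral_mem_Icc_of_mem_Icc hm
    (ae_of_all _ fun a => gaussianPDFReal_mem_Icc hΔ (hφ.abs_le x a) y)

lemma measurable_Pout (hφ : BoundedChannel φ B) (hΔ : 0 ≤ Δ) :
    Measurable (Function.uncurry (Pout Δ PA φ)) := by
  simp_rw [Function.uncurry_def, Pout_eq_integral_gaussianPDFReal hΔ]
  exact hφ.measurable_gaussianPDFReal.stronglyMeasurable.integral_prod_right'.measurable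

lemma measurable_Pout_apply (hφ : BoundedChannel φ B) (hΔ : 0 ≤ Δ) (y : ℝ) :
    Measurable (Pout Δ PA φ y) :=
  (hφ.measurable_Pout (PA := PA) hΔ).comp (f := fun x => (y, x)) (by fun_prop)

lemma integral_log_output (hφ : BoundedChannel φ B) (hΔ : 0 < Δ) {L : ℝ → ℝ}
    (hL : Measurable L) (hLB : ∀ y, |L y| ≤ logDensityBound Δ B y) (x : ℝ) :
    ∫ a, ∫ z, L (φ x a + √Δ * z) ∂stdG ∂PA = ∫ y, Pout Δ PA φ y x * L y := by
  simp_rw [integral_stdG_const_add_sqrt_mul hΔ hL, Pout_eq_integral_gaussianPDFReal hΔ.le,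
    ← integral_mul_const]
  refine integral_integral_swap_of_dominated ?_ (integrable_densityUpper_mul_logDensityBound hΔ B)
    fun a y => abs_mul_le_densityUpper_mul hΔ (gaussianPDFReal_mem_Icc hΔ (hφ.abs_le x a) y) (hLB y)
  exact (hφ.measurable_gaussianPDFReal.comp
    (f := fun p : (Fin kA → ℝ) × ℝ => ((p.2, x), p.1)) (by fun_prop)).mul (hL.comp measurable_snd)

lemma integral_log_output_gaussian (hφ : BoundedChannel φ B) (hΔ : 0 < Δ) {L : ℝ → ℝ}
    (hL : Measurable L) (hLB : ∀ y, |L y| ≤ logDensityBound Δ B y) (s x : ℝ) :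
    ∫ w, ∫ a, ∫ z, L (φ (x + √s * w) a + √Δ * z) ∂stdG ∂PA ∂stdG =
      ∫ y, heat s (Pout Δ PA φ y) x * L y := by
  have hP := hφ.measurable_Pout (PA := PA) hΔ.le
  simp_rw [hφ.integral_log_output hΔ hL hLB,
    ← integral_stdG_eq_heat s (hφ.measurable_Pout_apply hΔ.le _) x, ← integral_mul_const]
  refine integral_integral_swap_of_dominated ?_ (integrable_densityUpper_mul_logDensityBound hΔ B)
    fun w y => abs_mul_le_densityUpper_mul hΔ (hφ.Pout_mem_Icc hΔ y _) (hLB y)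
  exact (hP.comp (f := fun p : ℝ × ℝ => (p.2, x + √s * p.1)) (by fun_prop)).mul
    (hL.comp measurable_snd)

lemma heat_Pout_mem_Icc (hφ : BoundedChannel φ B) (hΔ : 0 < Δ) (s y x : ℝ) :
    heat s (Pout Δ PA φ y) x ∈ Set.Icc (densityLower Δ B y) (densityUpper Δ B y) :=
  heat_mem_Icc (hφ.measurable_Pout_apply hΔ.le y) (hφ.Pout_mem_Icc hΔ y) s x

lemma abs_negMulLog_heat_Pout_le (hφ : BoundedChannel φ B) (hΔ : 0 < Δ) (s y x : ℝ) :
    |negMulLog (heat s (Pout Δ PA φ y) x)| ≤ densityUpper Δ B y * logDensityBound Δ B y := by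
  have hp := hφ.heat_Pout_mem_Icc (PA := PA) hΔ s y x
  rw [negMulLog, neg_mul, abs_neg]
  exact abs_mul_le_densityUpper_mul hΔ hp (abs_log_le_logDensityBound hΔ hp)

lemma measurable_negMulLog_heat_Pout (hφ : BoundedChannel φ B) (hΔ : 0 ≤ Δ) (s : ℝ) :
    Measurable fun p : ℝ × ℝ => negMulLog (heat s (Pout Δ PA φ p.1) p.2) :=
  continuous_negMulLog.measurable.comp (measurable_uncurry_heat (hφ.measurable_Pout hΔ) s)

lemma integrable_heatEntropy_Pout (hφ : BoundedChannel φ B) (hΔ : 0 < Δ) (T q : ℝ) :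
    Integrable fun y => heatEntropy (Pout Δ PA φ y) T q := by
  have hm : Measurable fun p : ℝ × ℝ => negMulLog (heat (T - q) (Pout Δ PA φ p.1) (0 + p.2)) :=
    (hφ.measurable_negMulLog_heat_Pout hΔ.le (T - q)).comp
      (f := fun p : ℝ × ℝ => (p.1, 0 + p.2)) (by fun_prop)
  refine (integrable_densityUpper_mul_logDensityBound hΔ B).mono'
    hm.stronglyMeasurable.integral_prod_right'.aestronglyMeasurable (ae_of_all _ fun y => ?_)
  refine (norm_integral_le_of_norm_le_const (ae_of_all _ fun w =>
    hφ.abs_negMulLog_heat_Pout_le hΔ (T - q) y (0 + w))).trans_eq ?_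
  rw [probReal_univ, mul_one]

lemma integral_log_heat_Pout (hφ : BoundedChannel φ B) (hΔ : 0 < Δ) (s x : ℝ) :
    ∫ w, ∫ a, ∫ z, log (heat s (Pout Δ PA φ (φ (x + √s * w) a + √Δ * z)) x) ∂stdG ∂PA ∂stdG =
      -∫ y, negMulLog (heat s (Pout Δ PA φ y) x) := by
  have hm : Measurable fun y => log (heat s (Pout Δ PA φ y) x) :=
    ((measurable_uncurry_heat (hφ.measurable_Pout (PA := PA) hΔ.le) s).comp
      (f := fun y => (y, x)) (by fun_prop)).log
  rw [hφ.integral_log_output_gaussian hΔ hm fun y =>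
    abs_log_le_logDensityBound hΔ (hφ.heat_Pout_mem_Icc hΔ s y x)]
  simp_rw [negMulLog, neg_mul, integral_neg, neg_neg]

lemma integral_integral_negMulLog_heat_Pout (hφ : BoundedChannel φ B) (hΔ : 0 < Δ) (T q : ℝ) :
    ∫ v, (∫ y, negMulLog (heat (T - q) (Pout Δ PA φ y) (√q * v))) ∂stdG =
      ∫ y, heatEntropy (Pout Δ PA φ y) T q := by
  simp_rw [← integral_stdG_negMulLog_heat (hφ.measurable_Pout_apply (PA := PA) hΔ.le _) T q]
  refine integral_integral_swap_of_dominated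
    (D := fun y => densityUpper Δ B y * logDensityBound Δ B y) ?_
    (integrable_densityUpper_mul_logDensityBound hΔ B)
    fun v y => hφ.abs_negMulLog_heat_Pout_le hΔ (T - q) y (√q * v)
  exact (hφ.measurable_negMulLog_heat_Pout (PA := PA) hΔ.le (T - q)).comp
    (f := fun p : ℝ × ℝ => (p.2, √q * p.1)) (by fun_prop)

lemma IPout_eq_add_integral_heatEntropy (hφ : BoundedChannel φ B) (hΔ : 0 < Δ) (q T : ℝ) :
    IPout Δ PA φ q T =
      (∫ v, ∫ a, ∫ z, log (Pout Δ PA φ (φ (√T * v) a + √Δ * z) (√T * v)) ∂stdG ∂PA ∂stdG) +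
        ∫ y, heatEntropy (Pout Δ PA φ y) T q := by
  simp_rw [IPout, integral_stdG_eq_heat (T - q) (hφ.measurable_Pout_apply (PA := PA) hΔ.le _),
    hφ.integral_log_heat_Pout hΔ, integral_neg, sub_neg_eq_add,
    hφ.integral_integral_negMulLog_heat_Pout hΔ]

theorem concaveOn_IPout (hφ : BoundedChannel φ B) (hΔ : 0 < Δ) (T : ℝ) :
    ConcaveOn ℝ (Set.Icc 0 T) fun q => IPout Δ PA φ q T := by
  have hentropy : ConcaveOn ℝ (Set.Icc 0 T) fun q => ∫ y, heatEntropy (Pout Δ PA φ y) T q :=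
    integral_concaveOn_of_integrand_ae (convex_Icc 0 T)
      (ae_of_all _ fun y => concaveOn_heatEntropy
        (hφ.measurable_Pout_apply hΔ.le y) (densityLower_pos hΔ B y)
        (hφ.Pout_mem_Icc hΔ y))
      fun q _ => hφ.integrable_heatEntropy_Pout hΔ T q
  simp_rw [hφ.IPout_eq_add_integral_heatEntropy hΔ]
  exact (concaveOn_const _ (convex_Icc 0 T)).add hentropy

end BoundedChannel

end Channel

section GaussianChannel

/-- The likelihood ratio, averaged over a prior `P`, of the observation `√r * x + z` of a signal
under standard Gaussian noise. -/
def avgLikelihood (P : Measure ℝ) (r x z : ℝ) : ℝ :=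
  ∫ y, exp (r * x * y + √r * z * y - r * y ^ 2 / 2) ∂P

/-- The expected log-likelihood ratio, with the prior averaged out, when the signal is `x`; its mean
over `x` is `psiP P r`. -/
def logPartition (P : Measure ℝ) (r x : ℝ) : ℝ := ∫ z, log (avgLikelihood P r x z) ∂stdG

variable {P : Measure ℝ} {M r : ℝ}

lemma measurable_avgLikelihood [SFinite P] (r x : ℝ) : Measurable (avgLikelihood P r x) := by
  have hm : Measurable fun p : ℝ × ℝ => exp (r * x * p.2 + √r * p.1 * p.2 - r * p.2 ^ 2 / 2) := by
    fun_prop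
  exact hm.stronglyMeasurable.integral_prod_right'.measurable

lemma exp_mem_Icc_of_abs_le (hr : 0 ≤ r) {y : ℝ} (hy : |y| ≤ M) (x z : ℝ) :
    exp (r * x * y + √r * z * y - r * y ^ 2 / 2) ∈
      Set.Icc (exp (-(r * M * (|x| + M / 2) + √r * M * |z|)))
        (exp (r * M * (|x| + M / 2) + √r * M * |z|)) := by
  have hxy : |r * x * y| ≤ r * |x| * M := by
    rw [abs_mul, abs_mul, abs_of_nonneg hr]
    gcongr
  have hzy : |√r * z * y| ≤ √r * |z| * M := by
    rw [abs_mul, abs_mul, abs_of_nonneg (sqrt_nonneg r)]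
    gcongr
  have hyy : r * y ^ 2 ≤ r * M ^ 2 := by
    rw [← sq_abs y]
    gcongr
  rw [Set.mem_Icc, exp_le_exp, exp_le_exp]
  constructor <;> nlinarith [abs_le.1 hxy, abs_le.1 hzy, mul_nonneg hr (sq_nonneg y)]

variable [IsProbabilityMeasure P]

lemma integrable_exp_of_ae_abs_le (hM : ∀ᵐ y ∂P, |y| ≤ M) (hr : 0 ≤ r) (x z : ℝ) :
    Integrable (fun y => exp (r * x * y + √r * z * y - r * y ^ 2 / 2)) P :=
  .of_mem_Icc _ _ (by fun_prop) (hM.mono fun _ hy => exp_mem_Icc_of_abs_le hr hy x z)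

lemma avgLikelihood_mem_Icc (hM : ∀ᵐ y ∂P, |y| ≤ M) (hr : 0 ≤ r) (x z : ℝ) :
    avgLikelihood P r x z ∈ Set.Icc (exp (-(r * M * (|x| + M / 2) + √r * M * |z|)))
      (exp (r * M * (|x| + M / 2) + √r * M * |z|)) :=
  integral_mem_Icc_of_mem_Icc (by fun_prop)
    (hM.mono fun _ hy => exp_mem_Icc_of_abs_le hr hy x z)

lemma avgLikelihood_pos (hM : ∀ᵐ y ∂P, |y| ≤ M) (hr : 0 ≤ r) (x z : ℝ) :
    0 < avgLikelihood P r x z :=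
  (exp_pos _).trans_le (avgLikelihood_mem_Icc hM hr x z).1

lemma avgLikelihood_le_exp (hM : ∀ᵐ y ∂P, |y| ≤ M) (hr : 0 ≤ r) (x z : ℝ) :
    avgLikelihood P r x z ≤ exp (r * x ^ 2 / 2 + √r * M * |z|) := by
  have h := integral_mono_ae (integrable_exp_of_ae_abs_le hM hr x z)
    (integrable_const (exp (r * x ^ 2 / 2 + √r * M * |z|))) <| hM.mono fun y hy => by
      have hzy : √r * (z * y) ≤ √r * (|z| * M) := by
        refine mul_le_mul_of_nonneg_left ((le_abs_self _).trans ?_) (sqrt_nonneg r)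
        rw [abs_mul]
        gcongr
      exact exp_le_exp.2 (by nlinarith [mul_nonneg hr (sq_nonneg (x - y))])
  simpa only [avgLikelihood, integral_const, probReal_univ, one_smul] using h

lemma measureReal_singleton_mul_exp_le_avgLikelihood (hM : ∀ᵐ y ∂P, |y| ≤ M) (hr : 0 ≤ r)
    (a x z : ℝ) :
    P.real {a} * exp (r * x * a + √r * z * a - r * a ^ 2 / 2) ≤ avgLikelihood P r x z := by
  have h := setIntegral_le_integral (s := {a}) (integrable_exp_of_ae_abs_le hM hr x z)
    (ae_of_all _ fun _ => (exp_pos _).le)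
  rwa [integral_singleton] at h

lemma integrable_id_stdG : Integrable (fun z : ℝ => z) stdG :=
  (memLp_id_gaussianReal (μ := 0) (v := 1) 1).integrable (by simp)

lemma integral_abs_stdG_le_one : ∫ z, |z| ∂stdG ≤ 1 := by
  have hsq : Integrable (fun z : ℝ => z ^ 2) stdG :=
    (memLp_id_gaussianReal (μ := 0) (v := 1) 2).integrable_sq
  have hvar : ∫ z, z ^ 2 ∂stdG = 1 := by
    have h := variance_fun_id_gaussianReal (μ := 0) (v := 1)
    rw [variance_eq_integral (by fun_prop)] at h
    simpa [stdG] using h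
  have hle : ∫ z, |z| ∂stdG ≤ ∫ z, (1 / 2 + 1 / 2 * z ^ 2) ∂stdG :=
    integral_mono integrable_id_stdG.abs ((integrable_const _).add (hsq.const_mul _)) fun z => by
      linarith [sq_nonneg (|z| - 1), sq_abs z]
  rw [integral_add (integrable_const _) (hsq.const_mul _), integral_const_mul, hvar,
    integral_const, probReal_univ, one_smul] at hle
  linarith

lemma integral_exp_stdG (hr : 0 ≤ r) (y : ℝ) :
    ∫ z, exp (r * 0 * y + √r * z * y - r * y ^ 2 / 2) ∂stdG = 1 := by
  have hmgf : ∫ z, exp (√r * y * z) ∂stdG = exp (r * y ^ 2 / 2) := by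
    have h := congrFun (mgf_fun_id_gaussianReal (μ := 0) (v := 1)) (√r * y)
    simpa [mgf, stdG, mul_pow, sq_sqrt hr] using h
  calc ∫ z, exp (r * 0 * y + √r * z * y - r * y ^ 2 / 2) ∂stdG
      = ∫ z, exp (-(r * y ^ 2 / 2)) * exp (√r * y * z) ∂stdG := by
        simp_rw [← exp_add]
        congr! 3
        ring
    _ = 1 := by rw [integral_const_mul, hmgf, ← exp_add, neg_add_cancel, exp_zero]

lemma integrable_exp_stdG (r y : ℝ) :
    Integrable (fun z => exp (r * 0 * y + √r * z * y - r * y ^ 2 / 2)) stdG := by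
  refine ((integrable_exp_mul_gaussianReal (√r * y)).const_mul (exp (-(r * y ^ 2 / 2)))).congr
    (ae_of_all _ fun z => ?_)
  simp only [← exp_add]
  ring_nf

lemma integrable_exp_stdG_prod (hr : 0 ≤ r) :
    Integrable (fun p : ℝ × ℝ => exp (r * 0 * p.2 + √r * p.1 * p.2 - r * p.2 ^ 2 / 2))
      (stdG.prod P) := by
  refine (integrable_prod_iff' (by fun_prop)).2 ⟨ae_of_all _ fun y => integrable_exp_stdG r y, ?_⟩
  simp_rw [norm_eq_abs, abs_exp, integral_exp_stdG hr]
  exact integrable_const 1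

lemma integrable_avgLikelihood_zero (hr : 0 ≤ r) : Integrable (avgLikelihood P r 0) stdG :=
  (integrable_exp_stdG_prod hr).integral_prod_left

lemma integral_avgLikelihood_zero (hr : 0 ≤ r) : ∫ z, avgLikelihood P r 0 z ∂stdG = 1 := by
  simp_rw [avgLikelihood]
  rw [integral_integral_swap (integrable_exp_stdG_prod hr)]
  simp_rw [integral_exp_stdG hr, integral_const, probReal_univ, one_smul]

lemma integrable_log_avgLikelihood (hM : ∀ᵐ y ∂P, |y| ≤ M) (hr : 0 ≤ r) (x : ℝ) :
    Integrable (fun z => log (avgLikelihood P r x z)) stdG := by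
  refine ((integrable_const (r * M * (|x| + M / 2))).add
    (integrable_id_stdG.abs.const_mul (√r * M))).mono'
    (measurable_avgLikelihood r x).log.aestronglyMeasurable (ae_of_all _ fun z => ?_)
  have h := avgLikelihood_mem_Icc hM hr x z
  have hpos := avgLikelihood_pos hM hr x z
  exact abs_le.2 ⟨(le_log_iff_exp_le hpos).2 h.1, (log_le_iff_le_exp hpos).2 h.2⟩

lemma log_measureReal_singleton_add_le_logPartition (hM : ∀ᵐ y ∂P, |y| ≤ M) (hr : 0 ≤ r) {a : ℝ}
    (ha : 0 < P.real {a}) (x : ℝ) :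
    log (P.real {a}) + (r * x * a - r * a ^ 2 / 2) ≤ logPartition P r x := by
  have h := integral_mono ((integrable_const (log (P.real {a}) + (r * x * a - r * a ^ 2 / 2))).add
    (integrable_id_stdG.const_mul (√r * a))) (integrable_log_avgLikelihood hM hr x) fun z => by
      have hlog := log_le_log (by positivity)
        (measureReal_singleton_mul_exp_le_avgLikelihood hM hr a x z)
      rw [log_mul ha.ne' (exp_pos _).ne', log_exp] at hlog
      simp only [Pi.add_apply]
      linarith
  rw [integral_add' (integrable_const _) (integrable_id_stdG.const_mul _), integral_const_mul,
    stdG, integral_id_gaussianReal, mul_zero, add_zero, integral_const, probReal_univ,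
    one_smul] at h
  exact h

lemma logPartition_zero_nonpos (hM : ∀ᵐ y ∂P, |y| ≤ M) (hr : 0 ≤ r) : logPartition P r 0 ≤ 0 := by
  have h := integral_mono (integrable_log_avgLikelihood hM hr 0)
    ((integrable_avgLikelihood_zero hr).sub (integrable_const 1))
    fun z => log_le_sub_one_of_pos (avgLikelihood_pos hM hr 0 z)
  rwa [integral_sub' (integrable_avgLikelihood_zero hr) (integrable_const 1),
    integral_avgLikelihood_zero hr, integral_const, probReal_univ, one_smul, sub_self] at h

end GaussianChannel

section FiniteSupport

variable {P : Measure ℝ} {F : Finset ℝ}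

lemma integrable_of_ae_mem_finset [IsFiniteMeasure P] (hF : ∀ᵐ x ∂P, x ∈ (F : Set ℝ))
    (g : ℝ → ℝ) : Integrable g P := by
  have h : IntegrableOn g (F : Set ℝ) P := .of_finite F.finite_toSet
  rwa [IntegrableOn, Measure.restrict_eq_self_of_ae_mem hF] at h

lemma ae_measureReal_singleton_pos [IsFiniteMeasure P] (hF : ∀ᵐ x ∂P, x ∈ (F : Set ℝ)) :
    ∀ᵐ x ∂P, 0 < P.real {x} := by
  have hnull : ∀ᵐ x ∂P, ∀ y ∈ (F : Set ℝ), P {y} = 0 → x ≠ y := by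
    refine (ae_ball_iff F.countable_toSet).2 fun y _ => ?_
    by_cases hy : P {y} = 0
    · filter_upwards [compl_mem_ae_iff.2 hy] with x hx _ using hx
    · exact ae_of_all _ fun _ h => absurd h hy
  filter_upwards [hF, hnull] with x hx hx'
  exact ENNReal.toReal_pos (fun h => hx' x hx h rfl) (measure_ne_top P _)

end FiniteSupport

section SparsePrior

variable {P0 : Measure ℝ} {ρ : ℝ}

lemma ofReal_one_sub_add_ofReal (h0 : 0 ≤ ρ) (h1 : ρ ≤ 1) :
    ENNReal.ofReal (1 - ρ) + ENNReal.ofReal ρ = 1 := by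
  rw [← ENNReal.ofReal_add (sub_nonneg.2 h1) h0, sub_add_cancel, ENNReal.ofReal_one]

lemma isProbabilityMeasure_sparsePrior [IsProbabilityMeasure P0] (h0 : 0 ≤ ρ) (h1 : ρ ≤ 1) :
    IsProbabilityMeasure (sparsePrior ρ P0) :=
  ⟨by simp [sparsePrior, ofReal_one_sub_add_ofReal h0 h1]⟩

lemma integral_sparsePrior (h0 : 0 ≤ ρ) (h1 : ρ ≤ 1) {g : ℝ → ℝ} (hg : Integrable g P0) :
    ∫ x, g x ∂sparsePrior ρ P0 = (1 - ρ) * g 0 + ρ * ∫ x, g x ∂P0 := by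
  have hdirac : Integrable g (Measure.dirac 0) := integrable_dirac (by simp)
  rw [sparsePrior, integral_add_measure (hdirac.smul_measure ENNReal.ofReal_ne_top)
    (hg.smul_measure ENNReal.ofReal_ne_top), integral_smul_measure, integral_smul_measure,
    integral_dirac, ENNReal.toReal_ofReal (sub_nonneg.2 h1), ENNReal.toReal_ofReal h0, smul_eq_mul,
    smul_eq_mul]

lemma ae_sparsePrior {p : ℝ → Prop} (hp0 : p 0) (hp : ∀ᵐ x ∂P0, p x) :
    ∀ᵐ x ∂sparsePrior ρ P0, p x :=
  ae_add_measure_iff.2 ⟨Measure.ae_smul_measure (by simpa [ae_dirac_eq] using hp0) _,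
    Measure.ae_smul_measure hp _⟩

lemma ofReal_mul_le_sparsePrior (s : Set ℝ) : ENNReal.ofReal ρ * P0 s ≤ sparsePrior ρ P0 s := by
  simp [sparsePrior]

lemma ofReal_one_sub_le_sparsePrior : ENNReal.ofReal (1 - ρ) ≤ sparsePrior ρ P0 {0} := by
  simp [sparsePrior]

variable [IsProbabilityMeasure P0] {M r : ℝ}

lemma mul_measureReal_le_sparsePrior (h0 : 0 ≤ ρ) (h1 : ρ ≤ 1) (s : Set ℝ) :
    ρ * P0.real s ≤ (sparsePrior ρ P0).real s := by
  have := isProbabilityMeasure_sparsePrior (P0 := P0) h0 h1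
  have h := ENNReal.toReal_mono (measure_ne_top _ s)
    (ofReal_mul_le_sparsePrior (P0 := P0) (ρ := ρ) s)
  rwa [ENNReal.toReal_mul, ENNReal.toReal_ofReal h0] at h

lemma one_sub_le_sparsePrior_singleton_zero (h0 : 0 ≤ ρ) (h1 : ρ ≤ 1) :
    1 - ρ ≤ (sparsePrior ρ P0).real {0} := by
  have := isProbabilityMeasure_sparsePrior (P0 := P0) h0 h1
  have h := ENNReal.toReal_mono (measure_ne_top _ {0})
    (ofReal_one_sub_le_sparsePrior (P0 := P0) (ρ := ρ))
  rwa [ENNReal.toReal_ofReal (sub_nonneg.2 h1)] at h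

lemma nonneg_of_ae_abs_le (hM : ∀ᵐ x ∂P0, |x| ≤ M) : 0 ≤ M :=
  let ⟨x, hx⟩ := hM.exists
  (abs_nonneg x).trans hx

lemma ae_abs_le_sparsePrior (hM : ∀ᵐ x ∂P0, |x| ≤ M) : ∀ᵐ x ∂sparsePrior ρ P0, |x| ≤ M :=
  ae_sparsePrior (by simpa using nonneg_of_ae_abs_le hM) hM

lemma avgLikelihood_sparsePrior (h0 : 0 ≤ ρ) (h1 : ρ ≤ 1) (hM : ∀ᵐ x ∂P0, |x| ≤ M) (hr : 0 ≤ r)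
    (x z : ℝ) :
    avgLikelihood (sparsePrior ρ P0) r x z = (1 - ρ) + ρ * avgLikelihood P0 r x z := by
  rw [avgLikelihood, integral_sparsePrior h0 h1 (integrable_exp_of_ae_abs_le hM hr x z)]
  simp [avgLikelihood]

lemma avgLikelihood_sparsePrior_le (h0 : 0 < ρ) (h1 : ρ ≤ 1) (hM : ∀ᵐ x ∂P0, |x| ≤ M)
    (hr : 0 ≤ r) (x z : ℝ) :
    avgLikelihood (sparsePrior ρ P0) r x z
      ≤ 2 * exp (max 0 (log ρ + r * x ^ 2 / 2) + √r * M * |z|) := by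
  have hM0 := nonneg_of_ae_abs_le hM
  have hone : 1 ≤ exp (max 0 (log ρ + r * x ^ 2 / 2) + √r * M * |z|) :=
    one_le_exp (add_nonneg (le_max_left _ _) (by positivity))
  have hsignal : ρ * avgLikelihood P0 r x z
      ≤ exp (max 0 (log ρ + r * x ^ 2 / 2) + √r * M * |z|) :=
    calc ρ * avgLikelihood P0 r x z
        ≤ exp (log ρ) * exp (r * x ^ 2 / 2 + √r * M * |z|) := by
          rw [exp_log h0]
          exact mul_le_mul_of_nonneg_left (avgLikelihood_le_exp hM hr x z) h0.le
      _ = exp (log ρ + r * x ^ 2 / 2 + √r * M * |z|) := by rw [← exp_add, add_assoc]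
      _ ≤ _ := exp_le_exp.2 (by gcongr; exact le_max_right _ _)
  rw [avgLikelihood_sparsePrior h0.le h1 hM hr]
  linarith

lemma logPartition_sparsePrior_le (h0 : 0 < ρ) (h1 : ρ ≤ 1) (hM : ∀ᵐ x ∂P0, |x| ≤ M)
    (hr : 0 ≤ r) (x : ℝ) :
    logPartition (sparsePrior ρ P0) r x
      ≤ log 2 + max 0 (log ρ + r * x ^ 2 / 2) + √r * M := by
  have := isProbabilityMeasure_sparsePrior (P0 := P0) h0.le h1
  have hM' := ae_abs_le_sparsePrior (ρ := ρ) hM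
  have h := integral_mono (integrable_log_avgLikelihood hM' hr x)
    ((integrable_const (log 2 + max 0 (log ρ + r * x ^ 2 / 2))).add
      (integrable_id_stdG.abs.const_mul (√r * M))) fun z => by
      have hlog := log_le_log (avgLikelihood_pos hM' hr x z)
        (avgLikelihood_sparsePrior_le h0 h1 hM hr x z)
      rwa [log_mul two_ne_zero (exp_pos _).ne', log_exp, ← add_assoc] at hlog
  rw [integral_add' (integrable_const _) (integrable_id_stdG.abs.const_mul _),
    integral_const_mul, integral_const, probReal_univ, one_smul] at h
  have hM0 := nonneg_of_ae_abs_le hM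
  exact h.trans (add_le_add_right
    (mul_le_of_le_one_right (by positivity) integral_abs_stdG_le_one) _)

lemma log_one_sub_le_logPartition_sparsePrior (h0 : 0 ≤ ρ) (h1 : ρ < 1)
    (hM : ∀ᵐ x ∂P0, |x| ≤ M) (hr : 0 ≤ r) (x : ℝ) :
    log (1 - ρ) ≤ logPartition (sparsePrior ρ P0) r x := by
  have := isProbabilityMeasure_sparsePrior (P0 := P0) h0 h1.le
  have hatom := one_sub_le_sparsePrior_singleton_zero (P0 := P0) h0 h1.le
  have h := log_measureReal_singleton_add_le_logPartition (ae_abs_le_sparsePrior hM) hr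
    ((sub_pos.2 h1).trans_le hatom) x
  linarith [log_le_log (sub_pos.2 h1) hatom]

lemma log_mul_measureReal_add_le_logPartition_sparsePrior (h0 : 0 < ρ) (h1 : ρ ≤ 1)
    (hM : ∀ᵐ x ∂P0, |x| ≤ M) (hr : 0 ≤ r) {x : ℝ} (hx : 0 < P0.real {x}) :
    log ρ + log (P0.real {x}) + r * x ^ 2 / 2 ≤ logPartition (sparsePrior ρ P0) r x := by
  have := isProbabilityMeasure_sparsePrior (P0 := P0) h0.le h1
  have hatom := mul_measureReal_le_sparsePrior (P0 := P0) h0.le h1 {x}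
  have h := log_measureReal_singleton_add_le_logPartition (ae_abs_le_sparsePrior hM) hr
    ((mul_pos h0 hx).trans_le hatom) x
  have hlog := log_le_log (mul_pos h0 hx) hatom
  rw [log_mul h0.ne' hx.ne'] at hlog
  linarith

end SparsePrior

section ScalarInformation

/-- The expected signal energy `s * X ^ 2 / 2` when the energy of each realisation is capped
at `c`. -/
def cappedEnergy (P : Measure ℝ) (s c : ℝ) : ℝ := ∫ x, min (s * x ^ 2 / 2) c ∂P

/-- The Shannon entropy of a purely atomic law. -/
def atomEntropy (P : Measure ℝ) : ℝ := ∫ x, -log (P.real {x}) ∂P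

lemma cappedEnergy_mul (P : Measure ℝ) {a : ℝ} (ha : 0 ≤ a) (s c : ℝ) :
    cappedEnergy P (a * s) (a * c) = a * cappedEnergy P s c := by
  simp_rw [cappedEnergy, ← integral_const_mul, mul_min_of_nonneg _ _ ha, mul_div_assoc, mul_assoc]

variable {P0 : Measure ℝ} [IsProbabilityMeasure P0] {F : Finset ℝ} {M ρ r : ℝ}

lemma IP0_eq (hF : ∀ᵐ x ∂P0, x ∈ (F : Set ℝ)) (h0 : 0 ≤ ρ) (h1 : ρ ≤ 1) (r : ℝ) :
    IP0 ρ P0 r = ρ * ∫ x, (r * x ^ 2 / 2 - logPartition (sparsePrior ρ P0) r x) ∂P0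
      - (1 - ρ) * logPartition (sparsePrior ρ P0) r 0 := by
  have hpsi : psiP (sparsePrior ρ P0) r = ∫ x, logPartition (sparsePrior ρ P0) r x
      ∂sparsePrior ρ P0 := rfl
  have henergy : ∫ x, r * x ^ 2 / 2 ∂P0 = r / 2 * secondMoment P0 := by
    rw [secondMoment, ← integral_const_mul]
    congr! 2
    ring
  rw [IP0, hpsi, integral_sparsePrior h0 h1 (integrable_of_ae_mem_finset hF _),
    integral_sub (integrable_of_ae_mem_finset hF _) (integrable_of_ae_mem_finset hF _), henergy]
  ring

lemma IP0_le (hF : ∀ᵐ x ∂P0, x ∈ (F : Set ℝ)) (hM : ∀ᵐ x ∂P0, |x| ≤ M) (h0 : 0 < ρ) (h1 : ρ < 1)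
    (hr : 0 ≤ r) :
    IP0 ρ P0 r ≤ ρ * (cappedEnergy P0 r (-log ρ) + (atomEntropy P0 + 1 - log (1 - ρ))) := by
  have hnull : (1 - ρ) * -logPartition (sparsePrior ρ P0) r 0 ≤ ρ :=
    calc (1 - ρ) * -logPartition (sparsePrior ρ P0) r 0
        ≤ (1 - ρ) * ((1 - ρ)⁻¹ - 1) := by
          refine mul_le_mul_of_nonneg_left ?_ (sub_pos.2 h1).le
          linarith [one_sub_inv_le_log_of_pos (sub_pos.2 h1),
            log_one_sub_le_logPartition_sparsePrior h0.le h1 hM hr 0]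
      _ = ρ := by rw [mul_sub, mul_inv_cancel₀ (sub_pos.2 h1).ne']; ring
  have hsignal : ∫ x, (r * x ^ 2 / 2 - logPartition (sparsePrior ρ P0) r x) ∂P0
      ≤ ∫ x, (min (r * x ^ 2 / 2) (-log ρ) + (-log (P0.real {x}) - log (1 - ρ))) ∂P0 := by
    refine integral_mono_ae (integrable_of_ae_mem_finset hF _) (integrable_of_ae_mem_finset hF _) ?_
    filter_upwards [ae_measureReal_singleton_pos hF] with x hx
    have hzero := log_one_sub_le_logPartition_sparsePrior h0.le h1 hM hr x
    have hatom := log_mul_measureReal_add_le_logPartition_sparsePrior h0 h1.le hM hr hx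
    have hlog_atom := log_nonpos hx.le (measureReal_le_one (μ := P0))
    have hlog_zero := log_nonpos (sub_pos.2 h1).le (sub_le_self 1 h0.le)
    rw [← sub_le_iff_le_add, le_min_iff]
    constructor <;> linarith
  rw [integral_add (integrable_of_ae_mem_finset hF _) (integrable_of_ae_mem_finset hF _),
    integral_sub (integrable_of_ae_mem_finset hF _) (integrable_const _), integral_const,
    probReal_univ, one_smul] at hsignal
  rw [IP0_eq hF h0.le h1.le]
  have := mul_le_mul_of_nonneg_left hsignal h0.le
  rw [cappedEnergy, atomEntropy]
  linarith

lemma le_IP0 (hF : ∀ᵐ x ∂P0, x ∈ (F : Set ℝ)) (hM : ∀ᵐ x ∂P0, |x| ≤ M) (h0 : 0 < ρ) (h1 : ρ ≤ 1)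
    (hr : 0 ≤ r) : ρ * (cappedEnergy P0 r (-log ρ) - (log 2 + √r * M)) ≤ IP0 ρ P0 r := by
  have hnull : (1 - ρ) * logPartition (sparsePrior ρ P0) r 0 ≤ 0 := by
    have := isProbabilityMeasure_sparsePrior (P0 := P0) h0.le h1
    exact mul_nonpos_of_nonneg_of_nonpos (sub_nonneg.2 h1)
      (logPartition_zero_nonpos (ae_abs_le_sparsePrior hM) hr)
  have hsignal : ∫ x, (min (r * x ^ 2 / 2) (-log ρ) - (log 2 + √r * M)) ∂P0
      ≤ ∫ x, (r * x ^ 2 / 2 - logPartition (sparsePrior ρ P0) r x) ∂P0 := by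
    refine integral_mono (integrable_of_ae_mem_finset hF _) (integrable_of_ae_mem_finset hF _)
      fun x => ?_
    have h := logPartition_sparsePrior_le h0 h1 hM hr x
    have hmin : min (r * x ^ 2 / 2) (-log ρ) = r * x ^ 2 / 2 - max 0 (log ρ + r * x ^ 2 / 2) := by
      rw [sub_eq_add_neg, ← min_neg_neg, ← min_add_add_left]
      ring_nf
    simp only [hmin]
    linarith
  rw [integral_sub (integrable_of_ae_mem_finset hF _) (integrable_const _), integral_const,
    probReal_univ, one_smul] at hsignal
  have := mul_le_mul_of_nonneg_left hsignal h0.le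
  rw [IP0_eq hF h0.le h1, cappedEnergy]
  linarith

variable {γ s : ℝ}

lemma cappedEnergy_rescaled (P : Measure ℝ) (h0 : 0 ≤ ρ) (h1 : ρ ≤ 1) (hγ : 0 < γ) (s : ℝ) :
    cappedEnergy P (γ * |log ρ| * s) (-log ρ) = γ * |log ρ| * cappedEnergy P s (1 / γ) := by
  rw [← cappedEnergy_mul P (by positivity), ← abs_of_nonpos (log_nonpos h0 h1)]
  congr 1
  field_simp

lemma IP0_rescaled_le (hF : ∀ᵐ x ∂P0, x ∈ (F : Set ℝ)) (hM : ∀ᵐ x ∂P0, |x| ≤ M) (h0 : 0 < ρ)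
    (h1 : ρ < 1) (hγ : 0 < γ) (hs : 0 ≤ s) :
    1 / (γ * ρ * |log ρ|) * IP0 ρ P0 (γ * ρ * |log ρ| / ρ * s)
      ≤ cappedEnergy P0 s (1 / γ) + (atomEntropy P0 + 1 - log (1 - ρ)) / (γ * |log ρ|) := by
  have hL : 0 < |log ρ| := abs_pos.2 (log_neg h0 h1).ne
  have h := IP0_le hF hM h0 h1 (r := γ * |log ρ| * s) (by positivity)
  rw [cappedEnergy_rescaled P0 h0.le h1.le hγ] at h
  rw [show γ * ρ * |log ρ| / ρ * s = γ * |log ρ| * s by field_simp, one_div_mul_eq_div,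
    div_le_iff₀ (by positivity)]
  refine h.trans_eq ?_
  field_simp

lemma le_IP0_rescaled (hF : ∀ᵐ x ∂P0, x ∈ (F : Set ℝ)) (hM : ∀ᵐ x ∂P0, |x| ≤ M) (h0 : 0 < ρ)
    (h1 : ρ < 1) (hγ : 0 < γ) (hs : 0 ≤ s) :
    cappedEnergy P0 s (1 / γ) - (log 2 + √(γ * |log ρ| * s) * M) / (γ * |log ρ|)
      ≤ 1 / (γ * ρ * |log ρ|) * IP0 ρ P0 (γ * ρ * |log ρ| / ρ * s) := by
  have hL : 0 < |log ρ| := abs_pos.2 (log_neg h0 h1).ne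
  have h := le_IP0 hF hM h0 h1.le (r := γ * |log ρ| * s) (by positivity)
  rw [cappedEnergy_rescaled P0 h0.le h1.le hγ] at h
  rw [show γ * ρ * |log ρ| / ρ * s = γ * |log ρ| * s by field_simp, one_div_mul_eq_div,
    le_div_iff₀ (by positivity)]
  refine Eq.trans_le ?_ h
  field_simp

lemma tendsto_mul_abs_log (hγ : 0 < γ) :
    Filter.Tendsto (fun ρ => γ * |log ρ|) (nhdsWithin 0 (Set.Ioi 0)) Filter.atTop :=
  (Filter.tendsto_abs_atBot_atTop.comp tendsto_log_nhdsGT_zero).const_mul_atTop hγ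

lemma tendsto_entropy_error (hγ : 0 < γ) (C : ℝ) :
    Filter.Tendsto (fun ρ => (C - log (1 - ρ)) / (γ * |log ρ|)) (nhdsWithin 0 (Set.Ioi 0))
      (nhds 0) := by
  have hcont : ContinuousAt (fun ρ : ℝ => C - log (1 - ρ)) 0 := by
    fun_prop (disch := norm_num)
  exact (hcont.tendsto.mono_left nhdsWithin_le_nhds).div_atTop (tendsto_mul_abs_log hγ)

lemma tendsto_noise_error (hγ : 0 < γ) (C s : ℝ) :
    Filter.Tendsto (fun ρ => (log 2 + √(γ * |log ρ| * s) * C) / (γ * |log ρ|))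
      (nhdsWithin 0 (Set.Ioi 0)) (nhds 0) := by
  have h : Filter.Tendsto (fun t : ℝ => log 2 / t + √s * C / √t) Filter.atTop (nhds 0) := by
    simpa using (tendsto_const_nhds.div_atTop Filter.tendsto_id).add
      (tendsto_const_nhds.div_atTop tendsto_sqrt_atTop)
  refine (h.comp (tendsto_mul_abs_log hγ)).congr fun ρ => ?_
  have hpos : 0 ≤ γ * |log ρ| := by positivity
  simp only [Function.comp_apply]
  rw [add_div, sqrt_mul hpos, mul_assoc, mul_comm (√(γ * |log ρ|)), mul_div_assoc (√s * C),
    sqrt_div_self', mul_one_div]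

end ScalarInformation

section Truncation

variable {P : Measure ℝ} {s c t : ℝ}

lemma truncSMge_nonneg (P : Measure ℝ) (t : ℝ) : 0 ≤ truncSMge P t :=
  integral_nonneg fun x => by dsimp only [Pi.zero_apply]; positivity

lemma headSM_nonneg (P : Measure ℝ) (t : ℝ) : 0 ≤ headSM P t :=
  integral_nonneg fun x => by dsimp only [Pi.zero_apply]; positivity

lemma headSM_eq_zero (h : ∀ᵐ x ∂P, t ≤ |x|) : headSM P t = 0 :=
  integral_eq_zero_of_ae (h.mono fun _ hx => if_neg hx.not_gt)

lemma truncSMge_eq_zero (h : ∀ᵐ x ∂P, |x| < t) : truncSMge P t = 0 :=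
  integral_eq_zero_of_ae (h.mono fun _ hx => if_neg hx.not_ge)

lemma tailProb_eq_zero (h : ∀ᵐ x ∂P, |x| < t) : tailProb P t = 0 := by
  have hnull : P {x | t ≤ |x|} = 0 := by simpa only [ae_iff, not_lt] using h
  rw [tailProb, hnull, ENNReal.toReal_zero]

lemma measurableSet_le_abs (t : ℝ) : MeasurableSet {x : ℝ | t ≤ |x|} :=
  measurableSet_le measurable_const measurable_norm

lemma truncSMge_eq_setIntegral (P : Measure ℝ) (t : ℝ) :
    truncSMge P t = ∫ x in {x | t ≤ |x|}, x ^ 2 ∂P := by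
  rw [← integral_indicator (measurableSet_le_abs t)]
  rfl

lemma headSM_eq_setIntegral (P : Measure ℝ) (t : ℝ) :
    headSM P t = ∫ x in {x | t ≤ |x|}ᶜ, x ^ 2 ∂P := by
  rw [← integral_indicator (measurableSet_le_abs t).compl, headSM]
  congr with x
  simp only [Set.indicator, Set.mem_compl_iff, Set.mem_ofPred_eq, not_le]

lemma truncSMge_add_headSM (hP : Integrable (fun x => x ^ 2) P) (t : ℝ) :
    truncSMge P t + headSM P t = secondMoment P := by
  rw [truncSMge_eq_setIntegral, headSM_eq_setIntegral, secondMoment,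
    integral_add_compl (measurableSet_le_abs t) hP]

lemma truncSMge_mem_Icc (hP : Integrable (fun x => x ^ 2) P) (t : ℝ) :
    truncSMge P t ∈ Set.Icc 0 (secondMoment P) :=
  ⟨truncSMge_nonneg P t, by linarith [truncSMge_add_headSM hP t, headSM_nonneg P t]⟩

variable [IsFiniteMeasure P]

lemma integrable_min_energy (hP : Integrable (fun x => x ^ 2) P) (s c : ℝ) :
    Integrable (fun x => min (s * x ^ 2 / 2) c) P :=
  ((hP.const_mul s).div_const 2).inf (integrable_const c)

lemma cappedEnergy_le_cap {P : Measure ℝ} [IsProbabilityMeasure P]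
    (hP : Integrable (fun x => x ^ 2) P) (s c : ℝ) :
    cappedEnergy P s c ≤ c := by
  have h := integral_mono (integrable_min_energy hP s c) (integrable_const c)
    fun x => min_le_right _ _
  rwa [integral_const, probReal_univ, one_smul] at h

lemma setIntegral_cap_add_setIntegral_energy (P : Measure ℝ) (s c t : ℝ) :
    ∫ _ in {x | t ≤ |x|}, c ∂P + ∫ x in {x | t ≤ |x|}ᶜ, s * x ^ 2 / 2 ∂P
      = tailProb P t * c + s * headSM P t / 2 := by
  rw [setIntegral_const, integral_div, integral_const_mul, ← headSM_eq_setIntegral]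
  rfl

lemma cappedEnergy_le (hP : Integrable (fun x => x ^ 2) P) (s c t : ℝ) :
    cappedEnergy P s c ≤ tailProb P t * c + s * headSM P t / 2 := by
  have hmin := integrable_min_energy hP s c
  rw [cappedEnergy, ← integral_add_compl (measurableSet_le_abs t) hmin,
    ← setIntegral_cap_add_setIntegral_energy]
  exact add_le_add
    (integral_mono hmin.integrableOn (integrable_const c) fun x => min_le_right _ _)
    (integral_mono hmin.integrableOn ((hP.const_mul s).div_const 2).integrableOn
      fun x => min_le_left _ _)

lemma cappedEnergy_eq (hP : Integrable (fun x => x ^ 2) P)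
    (hlt : ∀ᵐ x ∂P, |x| < t → s * x ^ 2 / 2 ≤ c) (hge : ∀ᵐ x ∂P, t ≤ |x| → c ≤ s * x ^ 2 / 2) :
    cappedEnergy P s c = tailProb P t * c + s * headSM P t / 2 := by
  rw [cappedEnergy, ← integral_add_compl (measurableSet_le_abs t) (integrable_min_energy hP s c),
    ← setIntegral_cap_add_setIntegral_energy]
  congr 1
  · exact setIntegral_congr_ae (measurableSet_le_abs t)
      (hge.mono fun x hx hxt => min_eq_right (hx hxt))
  · exact setIntegral_congr_ae (measurableSet_le_abs t).compl
      (hlt.mono fun x hx hxt => min_eq_left (hx (not_le.1 hxt)))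

lemma cappedEnergy_critical (hP : Integrable (fun x => x ^ 2) P) {γ a : ℝ} (hγ : 0 < γ)
    (ha : 0 < a) (hat : a ≤ t) (hgap : ∀ᵐ x ∂P, |x| < t → |x| ≤ a) :
    cappedEnergy P (2 / (γ * a ^ 2)) (1 / γ)
      = tailProb P t / γ + 2 / (γ * a ^ 2) * headSM P t / 2 := by
  have henergy : ∀ x : ℝ, 2 / (γ * a ^ 2) * x ^ 2 / 2 = 1 / γ * (|x| / a) ^ 2 := fun x => by
    rw [div_pow, sq_abs]
    field_simp
  rw [← mul_one_div (tailProb P t)]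
  refine cappedEnergy_eq hP (hgap.mono fun x hx hxt => ?_) (ae_of_all _ fun x hxt => ?_)
  · rw [henergy]
    exact mul_le_of_le_one_right (by positivity)
      (pow_le_one₀ (by positivity) ((div_le_one ha).2 (hx hxt)))
  · rw [henergy]
    exact le_mul_of_one_le_right (by positivity)
      (one_le_pow₀ ((one_le_div ha).2 (hat.trans hxt)))

end Truncation

/-- `u` lists in increasing order positive levels that carry the law of `|X|` under `P`, followed
by one level above the support (the paper's `v_{K+1}`). -/
structure AbsLevels {K : ℕ} (u : Fin (K + 1) → ℝ) (P : Measure ℝ) : Prop where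
  strictMono : StrictMono u
  pos : ∀ k, 0 < u k
  ae_mem : ∀ᵐ x ∂P, ∃ k : Fin K, |x| = u k.castSucc

namespace AbsLevels

variable {K : ℕ} {u : Fin (K + 1) → ℝ} {P : Measure ℝ}

lemma ae_mem_finset (hu : AbsLevels u P) :
    ∀ᵐ x ∂P, x ∈ ((Finset.univ.image u ∪ Finset.univ.image (-u) : Finset ℝ) : Set ℝ) := by
  filter_upwards [hu.ae_mem] with x ⟨k, hk⟩
  rcases eq_or_eq_neg_of_abs_eq hk with rfl | rfl <;> simp

lemma ae_lt_last (hu : AbsLevels u P) : ∀ᵐ x ∂P, |x| < u (Fin.last K) :=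
  hu.ae_mem.mono fun _ ⟨k, hk⟩ => hk ▸ hu.strictMono (Fin.castSucc_lt_last k)

lemma ae_le_abs (hu : AbsLevels u P) : ∀ᵐ x ∂P, u 0 ≤ |x| :=
  hu.ae_mem.mono fun _ ⟨_, hk⟩ => hk ▸ hu.strictMono.monotone (Fin.zero_le _)

lemma ae_le_castSucc_of_lt_succ (hu : AbsLevels u P) (k : Fin K) :
    ∀ᵐ x ∂P, |x| < u k.succ → |x| ≤ u k.castSucc := by
  filter_upwards [hu.ae_mem] with x ⟨j, hj⟩ hlt
  rw [hj] at hlt ⊢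
  exact hu.strictMono.monotone (Fin.castSucc_le_castSucc_iff.2
    (Fin.castSucc_lt_succ_iff.1 (hu.strictMono.lt_iff_lt.1 hlt)))

lemma integrable [IsFiniteMeasure P] (hu : AbsLevels u P) (g : ℝ → ℝ) : Integrable g P :=
  integrable_of_ae_mem_finset hu.ae_mem_finset g

lemma truncSMge_zero [IsFiniteMeasure P] (hu : AbsLevels u P) :
    truncSMge P (u 0) = secondMoment P := by
  rw [← truncSMge_add_headSM (hu.integrable _) (u 0), headSM_eq_zero hu.ae_le_abs, add_zero]

end AbsLevels

lemma exists_mem_Icc_succ_castSucc {K : ℕ} [NeZero K] {f : Fin (K + 1) → ℝ} {q : ℝ}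
    (hq : q ∈ Set.Icc (f (Fin.last K)) (f 0)) :
    ∃ k : Fin K, q ∈ Set.Icc (f k.succ) (f k.castSucc) := by
  by_contra! h
  simp only [Set.mem_Icc, not_and, not_le] at h
  have hle : ∀ k, q ≤ f k := Fin.induction hq.2 fun k hk =>
    le_of_not_ge fun hsucc => (h k hsucc).not_ge hk
  obtain ⟨n, rfl⟩ := Nat.exists_eq_succ_of_ne_zero (NeZero.ne K)
  exact (h (Fin.last n) (by simpa using hq.1)).not_ge (hle _)

lemma iInf_iSup_mem_Icc {ι κ : Type*} [Nonempty κ] {f : ι → κ → ℝ} {lo hi : ℝ}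
    (hbdd : ∀ i, BddAbove (Set.range (f i))) (hlo : ∀ i, ∃ j, lo ≤ f i j)
    (hhi : ∃ i, ∀ j, f i j ≤ hi) : ⨅ i, ⨆ j, f i j ∈ Set.Icc lo hi := by
  obtain ⟨i₀, hi₀⟩ := hhi
  have hlo' : ∀ i, lo ≤ ⨆ j, f i j := fun i =>
    let ⟨j, hj⟩ := hlo i
    hj.trans (le_ciSup (hbdd i) j)
  have : Nonempty ι := ⟨i₀⟩
  exact ⟨le_ciInf hlo', (ciInf_le ⟨lo, Set.forall_mem_range.2 hlo'⟩ i₀).trans (ciSup_le hi₀)⟩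

section Potential

variable {kA K : ℕ}

/-- The value of the limiting variational problem at the overlap `E[X² 1(|X| ≥ t)]`. -/
def thresholdValue (Δ : ℝ) (PA : Measure (Fin kA → ℝ)) (φ : ℝ → (Fin kA → ℝ) → ℝ)
    (P0 : Measure ℝ) (γ τ t : ℝ) : ℝ :=
  IPout Δ PA φ (truncSMge P0 t) (secondMoment P0) + tailProb P0 t / γ + τ * headSM P0 t / 2

/-- The limit of `iRSside Δ PA φ P0 α ρ q r τ` as `ρ → 0⁺` along `α = γ ρ |log ρ|`. -/
def limitPotential (Δ : ℝ) (PA : Measure (Fin kA → ℝ)) (φ : ℝ → (Fin kA → ℝ) → ℝ)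
    (P0 : Measure ℝ) (γ τ q r : ℝ) : ℝ :=
  cappedEnergy P0 (r + τ) (1 / γ) + IPout Δ PA φ q (secondMoment P0)
    - r * (secondMoment P0 - q) / 2

variable {PA : Measure (Fin kA → ℝ)} {φ : ℝ → (Fin kA → ℝ) → ℝ} {P0 : Measure ℝ}
  {Δ γ τ ρ q r : ℝ} {u : Fin (K + 1) → ℝ}

lemma concaveOn_limitPotential
    (hconc : ConcaveOn ℝ (Set.Icc 0 (secondMoment P0)) fun q => IPout Δ PA φ q (secondMoment P0))
    (γ τ r : ℝ) :
    ConcaveOn ℝ (Set.Icc 0 (secondMoment P0)) fun q => limitPotential Δ PA φ P0 γ τ q r := by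
  have haffine : ConcaveOn ℝ (Set.Icc 0 (secondMoment P0)) fun q =>
      cappedEnergy P0 (r + τ) (1 / γ) - r * (secondMoment P0 - q) / 2 :=
    ⟨convex_Icc _ _, fun x _ y _ a b _ _ hab => by
      simp only [smul_eq_mul]
      linear_combination (cappedEnergy P0 (r + τ) (1 / γ) - r * secondMoment P0 / 2) * hab⟩
  refine (hconc.add haffine).congr fun q _ => ?_
  simp only [Pi.add_apply, limitPotential]
  ring

variable [IsProbabilityMeasure P0]

lemma limitPotential_truncSMge_le (hP0 : Integrable (fun x => x ^ 2) P0) (t r : ℝ) :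
    limitPotential Δ PA φ P0 γ τ (truncSMge P0 t) r ≤ thresholdValue Δ PA φ P0 γ τ t := by
  have h := cappedEnergy_le hP0 (r + τ) (1 / γ) t
  rw [mul_one_div] at h
  rw [limitPotential, thresholdValue, ← truncSMge_add_headSM hP0 t]
  linarith

lemma limitPotential_critical (hP0 : Integrable (fun x => x ^ 2) P0) (hγ : 0 < γ) {a t : ℝ}
    (ha : 0 < a) (hat : a ≤ t) (hgap : ∀ᵐ x ∂P0, |x| < t → |x| ≤ a) :
    limitPotential Δ PA φ P0 γ τ (truncSMge P0 t) (2 / (γ * a ^ 2) - τ)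
      = thresholdValue Δ PA φ P0 γ τ t := by
  rw [limitPotential, thresholdValue, sub_add_cancel, cappedEnergy_critical hP0 hγ ha hat hgap,
    ← truncSMge_add_headSM hP0 t]
  ring

lemma min_thresholdValue_le_limitPotential (hP0 : Integrable (fun x => x ^ 2) P0)
    (hconc : ConcaveOn ℝ (Set.Icc 0 (secondMoment P0)) fun q => IPout Δ PA φ q (secondMoment P0))
    (hγ : 0 < γ) {a b : ℝ} (ha : 0 < a) (hab : a ≤ b) (hgap : ∀ᵐ x ∂P0, |x| < b → |x| ≤ a)
    (hq : q ∈ Set.Icc (truncSMge P0 b) (truncSMge P0 a)) :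
    min (thresholdValue Δ PA φ P0 γ τ b) (thresholdValue Δ PA φ P0 γ τ a)
      ≤ limitPotential Δ PA φ P0 γ τ q (2 / (γ * a ^ 2) - τ) := by
  rw [← limitPotential_critical hP0 hγ ha hab hgap,
    ← limitPotential_critical hP0 hγ ha le_rfl (ae_of_all _ fun _ => le_of_lt)]
  exact (concaveOn_limitPotential hconc γ τ _).min_le_of_mem_Icc
    (truncSMge_mem_Icc hP0 b) (truncSMge_mem_Icc hP0 a) hq

lemma exists_iInf_thresholdValue_le_limitPotential (hu : AbsLevels u P0)
    (hconc : ConcaveOn ℝ (Set.Icc 0 (secondMoment P0)) fun q => IPout Δ PA φ q (secondMoment P0))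
    (hγ : 0 < γ) (hq : q ∈ Set.Icc 0 (secondMoment P0)) :
    ∃ k : Fin K, ⨅ j, thresholdValue Δ PA φ P0 γ τ (u j)
      ≤ limitPotential Δ PA φ P0 γ τ q (2 / (γ * u k.castSucc ^ 2) - τ) := by
  have : NeZero K := let ⟨_, k, _⟩ := hu.ae_mem.exists; ⟨(Fin.pos k).ne'⟩
  rw [← truncSMge_eq_zero hu.ae_lt_last, ← hu.truncSMge_zero] at hq
  obtain ⟨k, hk⟩ := exists_mem_Icc_succ_castSucc (f := fun k => truncSMge P0 (u k)) hq
  have hle : ∀ j, ⨅ j, thresholdValue Δ PA φ P0 γ τ (u j) ≤ thresholdValue Δ PA φ P0 γ τ (u j) :=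
    ciInf_le (Set.finite_range _).bddBelow
  exact ⟨k, (le_min (hle _) (hle _)).trans (min_thresholdValue_le_limitPotential
    (hu.integrable _) hconc hγ (hu.pos _) (hu.strictMono Fin.castSucc_lt_succ).le
    (hu.ae_le_castSucc_of_lt_succ k) hk)⟩

lemma iRSside_le (hu : AbsLevels u P0) (h0 : 0 < ρ) (h1 : ρ < 1) (hγ : 0 < γ) (hr : 0 ≤ r + τ) :
    iRSside Δ PA φ P0 (γ * ρ * |log ρ|) ρ q r τ ≤ limitPotential Δ PA φ P0 γ τ q r
      + (atomEntropy P0 + 1 - log (1 - ρ)) / (γ * |log ρ|) := by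
  have h := IP0_rescaled_le hu.ae_mem_finset (hu.ae_lt_last.mono fun _ => le_of_lt) h0 h1 hγ hr
  rw [iRSside, limitPotential]
  linarith

lemma le_iRSside (hu : AbsLevels u P0) (h0 : 0 < ρ) (h1 : ρ < 1) (hγ : 0 < γ) (hr : 0 ≤ r + τ) :
    limitPotential Δ PA φ P0 γ τ q r
        - (log 2 + √(γ * |log ρ| * (r + τ)) * u (Fin.last K)) / (γ * |log ρ|)
      ≤ iRSside Δ PA φ P0 (γ * ρ * |log ρ|) ρ q r τ := by
  have h := le_IP0_rescaled hu.ae_mem_finset (hu.ae_lt_last.mono fun _ => le_of_lt) h0 h1 hγ hr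
  rw [iRSside, limitPotential]
  linarith

lemma bddAbove_range_iRSside (hu : AbsLevels u P0) (h0 : 0 < ρ) (h1 : ρ < 1) (hγ : 0 < γ)
    (hτ0 : 0 ≤ τ) (hq : q ≤ secondMoment P0) :
    BddAbove (Set.range fun r : Set.Ici (0 : ℝ) =>
      iRSside Δ PA φ P0 (γ * ρ * |log ρ|) ρ q r τ) := by
  refine ⟨1 / γ + IPout Δ PA φ q (secondMoment P0)
    + (atomEntropy P0 + 1 - log (1 - ρ)) / (γ * |log ρ|), Set.forall_mem_range.2 fun r => ?_⟩
  have hlinear := mul_nonneg (show (0 : ℝ) ≤ r from r.2) (sub_nonneg.2 hq)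
  refine (iRSside_le hu h0 h1 hγ (add_nonneg r.2 hτ0)).trans (add_le_add_left ?_ _)
  rw [limitPotential]
  linarith [cappedEnergy_le_cap (hu.integrable fun x => x ^ 2) (r + τ) (1 / γ)]

lemma exists_iInf_thresholdValue_sub_le_iRSside (hu : AbsLevels u P0)
    (hconc : ConcaveOn ℝ (Set.Icc 0 (secondMoment P0)) fun q => IPout Δ PA φ q (secondMoment P0))
    (h0 : 0 < ρ) (h1 : ρ < 1) (hγ : 0 < γ) (hτ : ∀ k : Fin K, τ ≤ 2 / (γ * u k.castSucc ^ 2))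
    (hq : q ∈ Set.Icc 0 (secondMoment P0)) :
    ∃ r : Set.Ici (0 : ℝ), (⨅ k, thresholdValue Δ PA φ P0 γ τ (u k))
        - (log 2 + √(γ * |log ρ| * (2 / (γ * u 0 ^ 2))) * u (Fin.last K)) / (γ * |log ρ|)
      ≤ iRSside Δ PA φ P0 (γ * ρ * |log ρ|) ρ q r τ := by
  obtain ⟨k, hk⟩ := exists_iInf_thresholdValue_le_limitPotential hu hconc hγ hq
  have huk := hu.pos k.castSucc
  have h := le_iRSside (PA := PA) (φ := φ) (Δ := Δ) (q := q) hu h0 h1 hγ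
    (r := 2 / (γ * u k.castSucc ^ 2) - τ) (τ := τ) (by rw [sub_add_cancel]; positivity)
  have herror : (log 2 + √(γ * |log ρ| * (2 / (γ * u k.castSucc ^ 2))) * u (Fin.last K))
        / (γ * |log ρ|)
      ≤ (log 2 + √(γ * |log ρ| * (2 / (γ * u 0 ^ 2))) * u (Fin.last K)) / (γ * |log ρ|) := by
    have hu0 := hu.pos 0
    have hlast := hu.pos (Fin.last K)
    gcongr
    exact hu.strictMono.monotone (Fin.zero_le _)
  rw [sub_add_cancel] at h
  exact ⟨⟨_, sub_nonneg.2 (hτ k)⟩, (sub_le_sub hk herror).trans h⟩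

lemma exists_forall_iRSside_le (hu : AbsLevels u P0) (h0 : 0 < ρ) (h1 : ρ < 1) (hγ : 0 < γ)
    (hτ0 : 0 ≤ τ) :
    ∃ q : Set.Icc 0 (secondMoment P0), ∀ r : Set.Ici (0 : ℝ),
      iRSside Δ PA φ P0 (γ * ρ * |log ρ|) ρ q r τ ≤ (⨅ k, thresholdValue Δ PA φ P0 γ τ (u k))
        + (atomEntropy P0 + 1 - log (1 - ρ)) / (γ * |log ρ|) := by
  obtain ⟨k, hk⟩ := exists_eq_ciInf_of_finite (f := fun k => thresholdValue Δ PA φ P0 γ τ (u k))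
  have hP0 := hu.integrable fun x => x ^ 2
  rw [← hk]
  exact ⟨⟨_, truncSMge_mem_Icc hP0 (u k)⟩, fun r =>
    (iRSside_le hu h0 h1 hγ (add_nonneg r.2 hτ0)).trans
      (add_le_add_left (limitPotential_truncSMge_le hP0 (u k) r) _)⟩

lemma iInf_iSup_iRSside_mem_Icc (hu : AbsLevels u P0)
    (hconc : ConcaveOn ℝ (Set.Icc 0 (secondMoment P0)) fun q => IPout Δ PA φ q (secondMoment P0))
    (h0 : 0 < ρ) (h1 : ρ < 1) (hγ : 0 < γ) (hτ0 : 0 ≤ τ)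
    (hτ : ∀ k : Fin K, τ ≤ 2 / (γ * u k.castSucc ^ 2)) :
    (⨅ q : Set.Icc (0 : ℝ) (secondMoment P0), ⨆ r : Set.Ici (0 : ℝ),
        iRSside Δ PA φ P0 (γ * ρ * |log ρ|) ρ q r τ) ∈
      Set.Icc ((⨅ k, thresholdValue Δ PA φ P0 γ τ (u k))
          - (log 2 + √(γ * |log ρ| * (2 / (γ * u 0 ^ 2))) * u (Fin.last K)) / (γ * |log ρ|))
        ((⨅ k, thresholdValue Δ PA φ P0 γ τ (u k))
          + (atomEntropy P0 + 1 - log (1 - ρ)) / (γ * |log ρ|)) :=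
  iInf_iSup_mem_Icc (fun q => bddAbove_range_iRSside hu h0 h1 hγ hτ0 q.2.2)
    (fun q => exists_iInf_thresholdValue_sub_le_iRSside hu hconc h0 h1 hγ hτ q.2)
    (exists_forall_iRSside_le hu h0 h1 hγ hτ0)

theorem tendsto_iInf_iSup_iRSside (hu : AbsLevels u P0)
    (hconc : ConcaveOn ℝ (Set.Icc 0 (secondMoment P0)) fun q => IPout Δ PA φ q (secondMoment P0))
    (hγ : 0 < γ) (hτ0 : 0 ≤ τ) (hτ : ∀ k : Fin K, τ ≤ 2 / (γ * u k.castSucc ^ 2)) :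
    Filter.Tendsto
      (fun ρ : ℝ => ⨅ q : Set.Icc (0 : ℝ) (secondMoment P0), ⨆ r : Set.Ici (0 : ℝ),
        iRSside Δ PA φ P0 (γ * ρ * |log ρ|) ρ q r τ)
      (nhdsWithin 0 (Set.Ioi 0)) (nhds (⨅ k, thresholdValue Δ PA φ P0 γ τ (u k))) := by
  have hlo := (tendsto_noise_error hγ (u (Fin.last K)) (2 / (γ * u 0 ^ 2))).const_sub
    (⨅ k, thresholdValue Δ PA φ P0 γ τ (u k))
  have hhi := (tendsto_entropy_error hγ (atomEntropy P0 + 1)).const_add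
    (⨅ k, thresholdValue Δ PA φ P0 γ τ (u k))
  rw [sub_zero] at hlo
  rw [add_zero] at hhi
  refine tendsto_of_tendsto_of_tendsto_of_le_of_le' hlo hhi ?_ ?_ <;>
    filter_upwards [Ioo_mem_nhdsGT one_pos] with ρ ⟨h0, h1⟩
  exacts [(iInf_iSup_iRSside_mem_Icc hu hconc h0 h1 hγ hτ0 hτ).1,
    (iInf_iSup_iRSside_mem_Icc hu hconc h0 h1 hγ hτ0 hτ).2]

end Potential

section DiscretePrior

variable {K : ℕ} {v : Fin K → ℝ} {c : ℝ}

lemma two_div_mul_sq_le {γ a b : ℝ} (hγ : 0 < γ) (ha : 0 < a) (hab : a ≤ b) :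
    2 / (γ * b ^ 2) ≤ 2 / (γ * a ^ 2) := by
  gcongr

lemma strictMono_snoc (hv : StrictMono v) (hc : ∀ k, v k < c) :
    StrictMono (Fin.snoc v c : Fin (K + 1) → ℝ) := by
  intro i j
  induction i using Fin.lastCases with
  | last => exact fun h => absurd h (Fin.le_last j).not_gt
  | cast i =>
    induction j using Fin.lastCases with
    | last => simpa using hc i
    | cast j => simpa using fun h => hv h

lemma absLevels_snoc {P : Measure ℝ} (hvpos : ∀ k, 0 < v k) (hv : StrictMono v)
    (hcpos : 0 < c) (hc : ∀ k, v k < c) (hsupp : ∀ᵐ x ∂P, ∃ k : Fin K, x = v k ∨ x = -v k) :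
    AbsLevels (Fin.snoc v c) P where
  strictMono := strictMono_snoc hv hc
  pos := Fin.lastCases (by simpa using hcpos) fun k => by simpa using hvpos k
  ae_mem := hsupp.mono fun x ⟨k, hk⟩ => ⟨k, by
    rcases hk with rfl | rfl <;> simp [abs_of_pos (hvpos k)]⟩

lemma thresholdValue_of_ae_abs_lt {kA : ℕ} (Δ : ℝ) (PA : Measure (Fin kA → ℝ))
    (φ : ℝ → (Fin kA → ℝ) → ℝ) {P0 : Measure ℝ} (γ τ : ℝ) {t : ℝ}
    (hP0 : Integrable (fun x => x ^ 2) P0) (ht : ∀ᵐ x ∂P0, |x| < t) :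
    thresholdValue Δ PA φ P0 γ τ t
      = IPout Δ PA φ 0 (secondMoment P0) + τ * secondMoment P0 / 2 := by
  rw [thresholdValue, ← truncSMge_add_headSM hP0 t, truncSMge_eq_zero ht, tailProb_eq_zero ht,
    zero_div, add_zero, zero_add]

end DiscretePrior

theorem limit_variational_problem_side_info_general
    (Δ : ℝ) (hΔ : 0 < Δ)
    (kA : ℕ) (PA : Measure (Fin kA → ℝ)) [IsProbabilityMeasure PA]
    (φ : ℝ → (Fin kA → ℝ) → ℝ)
    (hφmeas : Measurable fun p : ℝ × (Fin kA → ℝ) => φ p.1 p.2)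
    (hφbd : ∃ B, ∀ x a, |φ x a| ≤ B)
    (K : ℕ) (v : Fin K → ℝ) (hvpos : ∀ k, 0 < v k) (hvmono : StrictMono v)
    (P0 : Measure ℝ) [IsProbabilityMeasure P0]
    (hsupp : ∀ᵐ x ∂P0, ∃ k : Fin K, x = v k ∨ x = -(v k))
    (γ : ℝ) (hγ : 0 < γ)
    (τ : ℝ) (hτ0 : 0 ≤ τ) (hτ : ∀ k, τ ≤ 2 / (γ * v k ^ 2)) :
    Filter.Tendsto
      (fun ρ : ℝ =>
        ⨅ q : Set.Icc (0 : ℝ) (secondMoment P0), ⨆ r : Set.Ici (0 : ℝ),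
          iRSside Δ PA φ P0 (γ * ρ * |Real.log ρ|) ρ q r τ)
      (nhdsWithin 0 (Set.Ioi 0))
      (nhds (⨅ k : Fin (K + 1),
        if h : (k : ℕ) < K then
          IPout Δ PA φ (truncSMge P0 (v ⟨k, h⟩)) (secondMoment P0)
            + tailProb P0 (v ⟨k, h⟩) / γ + τ * headSM P0 (v ⟨k, h⟩) / 2
        else IPout Δ PA φ 0 (secondMoment P0) + τ * secondMoment P0 / 2)) := by
  obtain ⟨B, hB⟩ := hφbd
  have hconc := BoundedChannel.concaveOn_IPout (PA := PA) ⟨hφmeas, hB⟩ hΔ (secondMoment P0)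
  obtain ⟨M, hM⟩ := Finite.exists_le v
  have hu := absLevels_snoc hvpos hvmono (c := |M| + 1) (by positivity)
    (fun k => ((hM k).trans (le_abs_self M)).trans_lt (lt_add_one _)) hsupp
  have hlim := tendsto_iInf_iSup_iRSside hu hconc hγ hτ0 (by simpa using hτ)
  convert hlim using 4 with k
  induction k using Fin.lastCases with
  | last =>
    rw [thresholdValue_of_ae_abs_lt Δ PA φ γ τ (hu.integrable _) hu.ae_lt_last,
      dif_neg (by simp)]
  | cast k => simp [thresholdValue]

/-- Proposition 5 of the paper: the limit as ρ → 0⁺ of the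
replica-symmetric variational problem with side information, for a discrete prior. -/
theorem limit_variational_problem_side_info
    (Δ : ℝ) (hΔ : 0 < Δ)
    (kA : ℕ) (PA : Measure (Fin kA → ℝ)) [IsProbabilityMeasure PA]
    (φ φ' φ'' : ℝ → (Fin kA → ℝ) → ℝ)
    -- (H2)
    (hφmeas : Measurable fun p : ℝ × (Fin kA → ℝ) => φ p.1 p.2)
    (hφbd : ∃ B, ∀ x a, |φ x a| ≤ B)
    (hd1 : ∀ a x, HasDerivAt (fun t => φ t a) (φ' x a) x)
    (hd2 : ∀ a x, HasDerivAt (fun t => φ' t a) (φ'' x a) x)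
    (hφ'bd : ∃ B, ∀ x a, |φ' x a| ≤ B)
    (hφ''bd : ∃ B, ∀ x a, |φ'' x a| ≤ B)
    (hφ'cont : ∀ a, Continuous fun x => φ' x a)
    (hφ''cont : ∀ a, Continuous fun x => φ'' x a)
    -- discrete prior with finite support, 0 < v 0 < ... < v (K-1)
    (K : ℕ) (hK : 0 < K) (v : Fin K → ℝ) (hvpos : 0 < v ⟨0, hK⟩) (hvmono : StrictMono v)
    (P0 : Measure ℝ) [IsProbabilityMeasure P0]
    (hsupp : ∀ᵐ x ∂P0, ∃ k : Fin K, x = v k ∨ x = -(v k))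
    (γ : ℝ) (hγ : 0 < γ)
    (τ : ℝ) (hτ0 : 0 ≤ τ)
    (hτ : τ < 2 / (γ * (v ⟨K - 1, by omega⟩) ^ 2)) :
    Filter.Tendsto
      (fun ρ : ℝ =>
        ⨅ q : Set.Icc (0 : ℝ) (secondMoment P0), ⨆ r : Set.Ici (0 : ℝ),
          iRSside Δ PA φ P0 (γ * ρ * |Real.log ρ|) ρ q r τ)
      (nhdsWithin 0 (Set.Ioi 0))
      (nhds (⨅ k : Fin (K + 1),
        if h : (k : ℕ) < K then
          IPout Δ PA φ (truncSMge P0 (v ⟨k, h⟩)) (secondMoment P0)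
            + tailProb P0 (v ⟨k, h⟩) / γ + τ * headSM P0 (v ⟨k, h⟩) / 2
        else IPout Δ PA φ 0 (secondMoment P0) + τ * secondMoment P0 / 2)) := by
  have hpos : ∀ k, 0 < v k := fun k => hvpos.trans_le (hvmono.monotone (Nat.zero_le k))
  exact limit_variational_problem_side_info_general Δ hΔ kA PA φ hφmeas hφbd K v hpos hvmono P0
    hsupp γ hγ τ hτ0 fun k => hτ.le.trans <|
      two_div_mul_sq_le hγ (hpos k) (hvmono.monotone (Nat.le_sub_one_of_lt k.2))

end GLM
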